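/- arXiv:1606.08085 — 13 statements merged into one kernel-verified Lean document; each statement's English description precedes it below -/
import Mathlib

section
/- Let N ≥ 1 and let F ∈ ℂ^{N×N} be the DFT matrix with entries F_{m,n} = e^{−2πi·mn/N}/√N. Let K and M be natural numbers with 2K ≤ M ≤ N. If x, x′ ∈ ℂ^N each have at most K nonzero entries and (Fx)_m = (Fx′)_m for every 0 ≤ m ≤ M−1, then x = x′. (Hence a K-sparse graph signal on the vertices of an undirected circulant graph is perfectly determined by its dimensionality-reduced GFT representation y = U_M^H x consisting of the first M ≥ 2K rows of the permuted GFT basis, which is the DFT matrix.) -/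
open Polynomial in
/-- Coefficients on a finite set of distinct nodes vanish as soon as as many consecutive power
moments as there are nodes vanish. -/
theorem eq_zero_of_sum_mul_pow_eq_zero {ι R : Type*} [Field R] {s : Finset ι} {v c : ι → R}
    (hv : Set.InjOn v s) (h : ∀ m < s.card, ∑ i ∈ s, c i * v i ^ m = 0) :
    ∀ i ∈ s, c i = 0 := by
  classical
  intro i hi
  have hpoly (P : R[X]) (hP : P.natDegree < s.card) : ∑ j ∈ s, c j * P.eval (v j) = 0 := by
    simp_rw [eval_eq_sum_range, Finset.mul_sum]
    rw [Finset.sum_comm]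
    refine Finset.sum_eq_zero fun m hm => ?_
    rw [← mul_zero (P.coeff m), ← h m (by grind), Finset.mul_sum]
    exact Finset.sum_congr rfl fun j _ => by ring
  have hcard : 0 < s.card := Finset.card_pos.mpr ⟨i, hi⟩
  have hdeg : (Lagrange.basis s v i).natDegree < s.card := by
    rw [natDegree_eq_of_degree_eq_some (Lagrange.degree_basis hv hi)]
    omega
  have hsum := hpoly _ hdeg
  rw [Finset.sum_eq_single_of_mem i hi, Lagrange.eval_basis_self hv hi, mul_one] at hsum
  · exact hsum
  · intro j hj hji
    rw [Lagrange.eval_basis_of_ne hji.symm hj, mul_zero]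

/-- A K-sparse signal on a circulant graph is determined by the first
M ≥ 2K entries of its GFT (DFT) representation. -/
theorem dft_sparse_recovery (N : ℕ) (hN : 1 ≤ N)
    (F : Matrix (Fin N) (Fin N) ℂ)
    (hF : ∀ m n : Fin N, F m n =
      Complex.exp (-2 * (Real.pi : ℂ) * Complex.I * ((m : ℕ) : ℂ) * ((n : ℕ) : ℂ) / (N : ℂ))
        / ((Real.sqrt N : ℝ) : ℂ))
    (K M : ℕ) (hKM : 2 * K ≤ M) (hMN : M ≤ N)
    (x x' : Fin N → ℂ)
    (hx : (Finset.univ.filter fun i => x i ≠ 0).card ≤ K)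
    (hx' : (Finset.univ.filter fun i => x' i ≠ 0).card ≤ K)
    (hsamp : ∀ m : Fin N, (m : ℕ) < M → F.mulVec x m = F.mulVec x' m) :
    x = x' := by
  classical
  set s : Finset (Fin N) :=
    (Finset.univ.filter fun i => x i ≠ 0) ∪ (Finset.univ.filter fun i => x' i ≠ 0) with hs
  have hsM : s.card ≤ M := (Finset.card_union_le _ _).trans (by omega)
  have hzero : ∀ i ∉ s, x i - x' i = 0 := by
    intro i hi
    simp only [hs, Finset.mem_union, Finset.mem_filter, Finset.mem_univ, true_and, not_or,
      not_not] at hi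
    rw [hi.1, hi.2, sub_zero]
  have hω := (Complex.isPrimitiveRoot_exp N (by omega)).inv
  set ω : ℂ := (Complex.exp (2 * Real.pi * Complex.I / N))⁻¹ with hωdef
  have hsqrt : ((Real.sqrt N : ℝ) : ℂ) ≠ 0 := by
    exact_mod_cast (Real.sqrt_pos.mpr (by exact_mod_cast hN)).ne'
  have hFω (m n : Fin N) : F m n = (ω ^ (n : ℕ)) ^ (m : ℕ) / ((Real.sqrt N : ℝ) : ℂ) := by
    rw [hF, hωdef, ← Complex.exp_neg, ← Complex.exp_nat_mul, ← Complex.exp_nat_mul]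
    congr 2
    ring
  have hinj : Set.InjOn (fun i : Fin N => ω ^ (i : ℕ)) s := fun i _ j _ hij =>
    Fin.ext (hω.pow_inj i.isLt j.isLt hij)
  have hc := eq_zero_of_sum_mul_pow_eq_zero (c := fun i => x i - x' i) hinj fun m hm => by
    have hm' : m < M := hm.trans_le hsM
    have hFm := hsamp ⟨m, hm'.trans_le hMN⟩ hm'
    rw [← sub_eq_zero, ← Pi.sub_apply, ← Matrix.mulVec_sub] at hFm
    simp only [Matrix.mulVec, dotProduct, hFω, Pi.sub_apply, div_mul_eq_mul_div] at hFm
    rw [← Finset.sum_div, div_eq_zero_iff, or_iff_left hsqrt] at hFm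
    rw [Finset.sum_subset (Finset.subset_univ s) fun i _ hi => by rw [hzero i hi, zero_mul], ← hFm]
    exact Finset.sum_congr rfl fun i _ => mul_comm _ _
  funext i
  by_cases hi : i ∈ s
  · exact sub_eq_zero.mp (hc i hi)
  · exact sub_eq_zero.mp (hzero i hi)
end

section
/- Let A be the adjacency matrix of an undirected circulant graph on N vertices with generating set S, positive weights (d_s)_{s∈S}, degree d per node and bandwidth B satisfying 2B < N, and let L = d·I_N − A be its graph Laplacian. Then the representer polynomial of L has two vanishing moments: for all a, b ∈ ℝ, the polynomial graph signal x ∈ ℝ^N with x_j = a + b·j (j = 0,…,N−1) satisfies (L x)_i = 0 for every index i with B ≤ i ≤ N−1−B; that is, L annihilates polynomial graph signals of degree at most 1 up to a border effect determined by the bandwidth B. -/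
/-- The symmetric circulant adjacency matrix of the circulant graph on `N` vertices
with generating set `S` and weights `w`. -/
noncomputable def circAdj (N : ℕ) (S : Finset ℕ) (w : ℕ → ℝ) :
    Matrix (Fin N) (Fin N) ℝ :=
  fun i j => ∑ s ∈ S,
    if ((i : ℤ) - (j : ℤ)) % (N : ℤ) = (s : ℤ) % (N : ℤ) ∨
       ((i : ℤ) - (j : ℤ)) % (N : ℤ) = (-(s : ℤ)) % (N : ℤ)
    then w s else 0

/-- Two integers in `[0, N)` that are congruent modulo `N` coincide. -/
theorem sub_emod_eq_emod_iff_eq_sub {N i j s : ℤ} (hj0 : 0 ≤ j) (hjN : j < N)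
    (h0 : 0 ≤ i - s) (hN : i - s < N) : (i - j) % N = s % N ↔ j = i - s := by
  refine ⟨fun h => ?_, fun h => by rw [h, sub_sub_cancel]⟩
  have hdvd : N ∣ i - s - j := by
    have := Int.dvd_of_emod_eq_zero (Int.emod_eq_emod_iff_emod_sub_eq_zero.mp h)
    rwa [sub_right_comm] at this
  have := Int.eq_zero_of_abs_lt_dvd hdvd (abs_lt.mpr ⟨by lia, by lia⟩)
  lia

/-- At a vertex at distance at least `s` from the border, the circulant neighbours at
distance `s` are exactly `i - s` and `i + s`. -/
theorem sum_circulant_neighbours {N s : ℕ} (f : Fin N → ℝ) (c : ℝ) (i : Fin N) (hs : 1 ≤ s)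
    (hlow : s ≤ (i : ℕ)) (hhigh : (i : ℕ) + s < N) :
    ∑ j : Fin N, (if ((i : ℤ) - (j : ℤ)) % (N : ℤ) = (s : ℤ) % (N : ℤ) ∨
        ((i : ℤ) - (j : ℤ)) % (N : ℤ) = (-(s : ℤ)) % (N : ℤ) then c else 0) * f j =
      c * f ⟨i - s, by lia⟩ + c * f ⟨i + s, hhigh⟩ := by
  have hne : (⟨i - s, by lia⟩ : Fin N) ≠ ⟨i + s, hhigh⟩ := by
    simp only [ne_eq, Fin.mk.injEq]
    lia
  rw [← Finset.sum_pair (f := fun j => c * f j) hne, ← Finset.sum_subset (Finset.subset_univ _)]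
  · refine Finset.sum_congr rfl fun j hj => ?_
    rw [if_pos]
    rw [Finset.mem_insert, Finset.mem_singleton, Fin.ext_iff, Fin.ext_iff] at hj
    rw [sub_emod_eq_emod_iff_eq_sub (by lia) (by lia) (by lia) (by lia),
      sub_emod_eq_emod_iff_eq_sub (by lia) (by lia) (by lia) (by lia)]
    simp only at hj
    lia
  · intro j _ hj
    rw [if_neg, zero_mul]
    rw [Finset.mem_insert, Finset.mem_singleton, Fin.ext_iff, Fin.ext_iff] at hj
    rw [sub_emod_eq_emod_iff_eq_sub (by lia) (by lia) (by lia) (by lia),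
      sub_emod_eq_emod_iff_eq_sub (by lia) (by lia) (by lia) (by lia)]
    simp only at hj
    lia

/-- the circulant graph Laplacian has two vanishing moments: it annihilates
polynomial graph signals of degree at most 1, up to a border effect of size the bandwidth. -/
theorem circulant_laplacian_two_vanishing_moments
    (N : ℕ) (S : Finset ℕ) (w : ℕ → ℝ)
    (hS : ∀ s ∈ S, 1 ≤ s ∧ 2 * s ≤ N - 1)
    (hw : ∀ s ∈ S, 0 < w s)
    (B : ℕ) (hBS : B ∈ S) (hBmax : ∀ s ∈ S, s ≤ B) (hBN : 2 * B < N)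
    (A : Matrix (Fin N) (Fin N) ℝ) (hA : A = circAdj N S w)
    (L : Matrix (Fin N) (Fin N) ℝ)
    (hL : L = (∑ s ∈ S, 2 * w s) • (1 : Matrix (Fin N) (Fin N) ℝ) - A)
    (a b : ℝ) (x : Fin N → ℝ) (hx : ∀ j : Fin N, x j = a + b * (j : ℕ))
    (i : Fin N) (hi1 : B ≤ (i : ℕ)) (hi2 : (i : ℕ) ≤ N - 1 - B) :
    L.mulVec x i = 0 := by
  subst hA hL
  have hsum : (circAdj N S w).mulVec x i = ∑ s ∈ S, 2 * w s * x i := by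
    simp only [Matrix.mulVec, dotProduct, circAdj, Finset.sum_mul]
    rw [Finset.sum_comm]
    refine Finset.sum_congr rfl fun s hs => ?_
    have hsB := hBmax s hs
    have hsi : s ≤ (i : ℕ) := hsB.trans hi1
    rw [sum_circulant_neighbours x (w s) i (hS s hs).1 hsi (by lia), hx, hx, hx]
    push_cast [Nat.cast_sub hsi]
    ring
  rw [Matrix.sub_mulVec, Matrix.smul_mulVec, Matrix.one_mulVec, Pi.sub_apply, hsum,
    Pi.smul_apply, smul_eq_mul, Finset.sum_mul, sub_self]
end

section
/- Let A be the adjacency matrix of an undirected circulant graph on N vertices with generating set S, positive weights (d_s)_{s∈S}, and bandwidth B satisfying 2B < N. For α ∈ ℝ let L̃_α = d̃_α·I_N − A be the e-graph Laplacian, where d̃_α = Σ_{s∈S} 2d_s cos(αs). Then L̃_α has two vanishing exponential moments: for every c ∈ ℂ and either sign choice, the complex exponential graph signal x ∈ ℂ^N with x_j = c·e^{±iαj} (j = 0,…,N−1) satisfies (L̃_α x)_i = 0 for every index i with B ≤ i ≤ N−1−B; that is, L̃_α annihilates complex exponential graph signals with exponent ±iα up to a border effect determined by the bandwidth B. -/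
/-- Integers at distance less than `N` are congruent modulo `N` only if they are equal. -/
theorem emod_eq_emod_iff_of_abs_sub_lt {a b N : ℤ} (h : |a - b| < N) :
    a % N = b % N ↔ a = b := by
  refine ⟨fun hab => ?_, fun hab => hab ▸ rfl⟩
  have hdvd : N ∣ a - b := Int.dvd_of_emod_eq_zero (Int.emod_eq_emod_iff_emod_sub_eq_zero.mp hab)
  exact sub_eq_zero.mp (Int.eq_zero_of_abs_lt_dvd hdvd h)

/-- Away from the border, the neighbours of `i` at circular distance `s` are `i - s` and `i + s`. -/
theorem circ_adj_iff {N s : ℕ} {i : Fin N} (hs : s ≤ i) (hsN : (i : ℕ) + s < N) (j : Fin N) :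
    (((i : ℤ) - (j : ℤ)) % (N : ℤ) = (s : ℤ) % (N : ℤ) ∨
      ((i : ℤ) - (j : ℤ)) % (N : ℤ) = (-(s : ℤ)) % (N : ℤ)) ↔
    j = ⟨i - s, by omega⟩ ∨ j = ⟨i + s, hsN⟩ := by
  have hj := j.isLt
  rw [emod_eq_emod_iff_of_abs_sub_lt (by rw [abs_lt]; omega),
    emod_eq_emod_iff_of_abs_sub_lt (by rw [abs_lt]; omega), Fin.ext_iff, Fin.ext_iff]
  dsimp only
  omega

/-- Away from the border, `circAdj` acts as a symmetric convolution. -/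
theorem circAdj_mulVec_apply {N : ℕ} {S : Finset ℕ} {w : ℕ → ℝ} {i : Fin N}
    (hS : ∀ s ∈ S, 1 ≤ s ∧ s ≤ i ∧ (i : ℕ) + s < N) {f : ℕ → ℂ} {x : Fin N → ℂ}
    (hx : ∀ j : Fin N, x j = f j) :
    ((circAdj N S w).map Complex.ofReal).mulVec x i =
      ∑ s ∈ S, (w s : ℂ) * (f (i - s) + f (i + s)) := by
  simp only [Matrix.mulVec, dotProduct, Matrix.map_apply, circAdj, Complex.ofReal_sum,
    Finset.sum_mul]
  rw [Finset.sum_comm]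
  refine Finset.sum_congr rfl fun s hs => ?_
  obtain ⟨h1, h2, h3⟩ := hS s hs
  simp only [circ_adj_iff h2 h3]
  have hne : (⟨i - s, by omega⟩ : Fin N) ≠ ⟨i + s, h3⟩ := by
    rw [Ne, Fin.mk.injEq]
    omega
  rw [← Finset.sum_subset (Finset.subset_univ {⟨i - s, by omega⟩, ⟨i + s, h3⟩}),
    Finset.sum_pair hne]
  · simp [hx, mul_add]
  · intro j _ hj
    rw [Finset.mem_insert, Finset.mem_singleton] at hj
    simp [hj]

/-- The symmetric second sum of a complex exponential is a multiple of it. -/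
theorem exp_sub_add_exp_add (a b : ℂ) :
    Complex.exp (Complex.I * (a - b)) + Complex.exp (Complex.I * (a + b)) =
      2 * Complex.cos b * Complex.exp (Complex.I * a) := by
  rw [Complex.two_cos, add_mul, ← Complex.exp_add, ← Complex.exp_add, add_comm]
  ring_nf

/-- the e-graph Laplacian `L̃_α = d̃_α I − A` has two vanishing exponential
moments: it annihilates complex exponential graph signals `x j = c e^{±iαj}` up to a border
effect of size the bandwidth `B`. -/
theorem e_graph_laplacian_two_vanishing_exponential_moments
    (N : ℕ) (S : Finset ℕ) (w : ℕ → ℝ)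
    (hS : ∀ s ∈ S, 1 ≤ s ∧ 2 * s ≤ N - 1)
    (hw : ∀ s ∈ S, 0 < w s)
    (B : ℕ) (hBS : B ∈ S) (hBmax : ∀ s ∈ S, s ≤ B) (hBN : 2 * B < N)
    (A : Matrix (Fin N) (Fin N) ℝ) (hA : A = circAdj N S w)
    (α : ℝ)
    (Lt : Matrix (Fin N) (Fin N) ℂ)
    (hLt : Lt = ((∑ s ∈ S, 2 * w s * Real.cos (α * s) : ℝ) : ℂ) •
        (1 : Matrix (Fin N) (Fin N) ℂ) - A.map Complex.ofReal)
    (c : ℂ) (ε : ℝ) (hε : ε = 1 ∨ ε = -1)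
    (x : Fin N → ℂ)
    (hx : ∀ j : Fin N, x j = c * Complex.exp (Complex.I * ((ε * α * (j : ℕ) : ℝ) : ℂ)))
    (i : Fin N) (hi1 : B ≤ (i : ℕ)) (hi2 : (i : ℕ) ≤ N - 1 - B) :
    Lt.mulVec x i = 0 := by
  subst hA hLt
  rw [Matrix.sub_mulVec, Pi.sub_apply, Matrix.smul_mulVec, Matrix.one_mulVec, Pi.smul_apply,
    smul_eq_mul, sub_eq_zero, hx i, Complex.ofReal_sum, Finset.sum_mul,
    circAdj_mulVec_apply (f := fun n => c * Complex.exp (Complex.I * ((ε * α * n : ℝ) : ℂ))) _ hx]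
  · refine Finset.sum_congr rfl fun s hs => ?_
    have hsi : s ≤ i := (hBmax s hs).trans hi1
    have hcos : Complex.cos (ε * α * s) = Complex.cos (α * s) := by
      rcases hε with rfl | rfl <;> simp
    have hexp := exp_sub_add_exp_add (ε * α * (i : ℕ)) (ε * α * s)
    rw [hcos, ← mul_sub, ← mul_add] at hexp
    push_cast [Nat.cast_sub hsi]
    rw [← mul_add, hexp]
    ring
  · intro s hs
    have h1 := hS s hs
    have h2 := hBmax s hs
    omega
end

section
/- Let A be the adjacency matrix of an undirected, connected circulant graph on N vertices with generating set S (connectedness being equivalent to gcd(S ∪ {N}) = 1), positive weights (d_s)_{s∈S} and degree d per node, let k ≥ 1, and let H_LP = (1/2^k)(I_N + A/d)^k and H_HP = (1/2^k)(I_N − A/d)^k be the HGSWT filters of order 2k. Then for every diagonal downsampling matrix K with diagonal entries in {+1,−1} having at least one entry equal to +1 (a node retaining the low-pass component) and at least one entry equal to −1 (the complementary set of nodes retaining the high-pass components), the one-level filterbank matrix W = (1/2)(I_N + K)·H_LP + (1/2)(I_N − K)·H_HP is invertible. -/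
open Matrix

section StochasticFilters

variable {n : Type*} [DecidableEq n]

theorem isHermitian_one_add_smul {B : Matrix n n ℝ} (hsymm : ∀ i j, B i j = B j i) (ε : ℝ) :
    (1 + ε • B).IsHermitian := by
  refine isHermitian_one.add ?_
  ext i j
  simp [hsymm j i]

variable [Fintype n]

/-- The quadratic form of `1 + ε B`, for `ε = ±1` and `B` symmetric with unit row sums. -/
theorem dotProduct_one_add_smul_mulVec {B : Matrix n n ℝ} (hsymm : ∀ i j, B i j = B j i)
    (hrow : ∀ i, ∑ j, B i j = 1) {ε : ℝ} (hε : ε ^ 2 = 1) (x : n → ℝ) :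
    x ⬝ᵥ ((1 + ε • B) *ᵥ x) = (1 / 2) * ∑ i, ∑ j, B i j * (x i + ε * x j) ^ 2 := by
  have hleft : ∑ i, ∑ j, B i j * x i ^ 2 = ∑ i, x i ^ 2 := by
    simp_rw [← Finset.sum_mul, hrow, one_mul]
  have hright : ∑ i, ∑ j, B i j * x j ^ 2 = ∑ i, x i ^ 2 := by
    rw [Finset.sum_comm, ← hleft]
    exact Finset.sum_congr rfl fun i _ => Finset.sum_congr rfl fun j _ => by rw [hsymm]
  have hexpand : ∀ i j, B i j * (x i + ε * x j) ^ 2 =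
      B i j * x i ^ 2 + B i j * x j ^ 2 + 2 * (x i * (ε * (B i j * x j))) := fun i j => by
    linear_combination (B i j * x j ^ 2) * hε
  simp_rw [hexpand, Finset.sum_add_distrib]
  rw [hleft, hright, add_mulVec, one_mulVec, smul_mulVec, dotProduct_add]
  simp only [dotProduct, mulVec, Pi.smul_apply, smul_eq_mul, Finset.mul_sum, mul_add]
  simp only [← Finset.mul_sum, ← pow_two]
  ring

theorem posSemidef_one_add_smul {B : Matrix n n ℝ} (hsymm : ∀ i j, B i j = B j i)
    (hnonneg : ∀ i j, 0 ≤ B i j) (hrow : ∀ i, ∑ j, B i j = 1) {ε : ℝ} (hε : ε ^ 2 = 1) :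
    (1 + ε • B).PosSemidef := by
  refine .of_dotProduct_mulVec_nonneg (isHermitian_one_add_smul hsymm ε) fun x => ?_
  rw [star_trivial, dotProduct_one_add_smul_mulVec hsymm hrow hε]
  exact mul_nonneg (by norm_num) <| Finset.sum_nonneg fun i _ => Finset.sum_nonneg fun j _ =>
    mul_nonneg (hnonneg i j) (sq_nonneg _)

/-- The zero set of a vector in the kernel of `1 ± B` is closed under adjacency. -/
theorem eq_zero_of_one_add_smul_mulVec_eq_zero {B : Matrix n n ℝ}
    (hsymm : ∀ i j, B i j = B j i) (hnonneg : ∀ i j, 0 ≤ B i j) (hrow : ∀ i, ∑ j, B i j = 1)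
    {ε : ℝ} (hε : ε ^ 2 = 1) {u : n → ℝ} (hu : (1 + ε • B) *ᵥ u = 0)
    {i j : n} (hij : 0 < B i j) (hi : u i = 0) : u j = 0 := by
  have hquad := dotProduct_one_add_smul_mulVec hsymm hrow hε u
  rw [hu, dotProduct_zero] at hquad
  have hsum : ∑ i, ∑ j, B i j * (u i + ε * u j) ^ 2 = 0 := by linarith
  have hterm : ∀ i j, 0 ≤ B i j * (u i + ε * u j) ^ 2 := fun i j =>
    mul_nonneg (hnonneg i j) (sq_nonneg _)
  rw [Finset.sum_eq_zero_iff_of_nonneg fun i _ => Finset.sum_nonneg fun j _ => hterm i j] at hsum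
  have hi_sum := hsum i (Finset.mem_univ i)
  rw [Finset.sum_eq_zero_iff_of_nonneg fun j _ => hterm i j] at hi_sum
  have hzero := hi_sum j (Finset.mem_univ j)
  rw [hi, zero_add, mul_pow, hε, one_mul] at hzero
  exact pow_eq_zero_iff two_ne_zero |>.1 ((mul_eq_zero.1 hzero).resolve_left hij.ne')

theorem Matrix.IsHermitian.mulVec_eq_zero_of_pow_mulVec_eq_zero {H : Matrix n n ℝ}
    (hH : H.IsHermitian) {x : n → ℝ} :
    ∀ {k : ℕ}, (H ^ k) *ᵥ x = 0 → H *ᵥ x = 0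
  | 0, h => by
    rw [pow_zero, one_mulVec] at h
    rw [h, mulVec_zero]
  | 1, h => by rwa [pow_one] at h
  | k + 2, h => by
    refine hH.mulVec_eq_zero_of_pow_mulVec_eq_zero (k := k + 1) ?_
    have hsq : (Hᴴ * H) *ᵥ ((H ^ k) *ᵥ x) = 0 := by
      rw [hH.eq, mulVec_mulVec, ← pow_two, ← pow_add, add_comm, h]
    rw [conjTranspose_mul_self_mulVec_eq_zero, mulVec_mulVec, ← pow_succ'] at hsq
    exact hsq

/-- For a connected symmetric stochastic matrix `B`, a vector is zero as soon as at every vertex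
its low-pass or its high-pass component vanishes, and each of the two vanishes somewhere. -/
theorem eq_zero_of_lowPass_or_highPass_eq_zero {B : Matrix n n ℝ}
    (hsymm : ∀ i j, B i j = B j i) (hnonneg : ∀ i j, 0 ≤ B i j) (hrow : ∀ i, ∑ j, B i j = 1)
    (hconn : ∀ p : n → Prop, (∀ i j, 0 < B i j → p i → p j) → (∃ i, p i) → ∀ i, p i)
    {k : ℕ} {x : n → ℝ}
    (hall : ∀ i, (((1 + B) ^ k) *ᵥ x) i = 0 ∨ (((1 - B) ^ k) *ᵥ x) i = 0)
    (hlow : ∃ i, (((1 + B) ^ k) *ᵥ x) i = 0) (hhigh : ∃ i, (((1 - B) ^ k) *ᵥ x) i = 0) :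
    x = 0 := by
  have hplus : (1 : Matrix n n ℝ) + B = 1 + (1 : ℝ) • B := by rw [one_smul]
  have hminus : (1 : Matrix n n ℝ) - B = 1 + (-1 : ℝ) • B := by
    rw [neg_smul, one_smul, sub_eq_add_neg]
  have hpos_plus : (1 + B).PosSemidef :=
    hplus ▸ posSemidef_one_add_smul hsymm hnonneg hrow (by norm_num)
  have hpos_minus : (1 - B).PosSemidef :=
    hminus ▸ posSemidef_one_add_smul hsymm hnonneg hrow (by norm_num)
  have hcomm : Commute (1 + B) (1 - B) :=
    ((Commute.one_left _).add_left ((Commute.one_right B).sub_right (Commute.refl B)))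
  have hpos_mul : ((1 + B) * (1 - B)).PosSemidef := by
    have h₁ := hpos_minus.conjTranspose_mul_mul_same (1 + B)
    have h₂ := hpos_plus.conjTranspose_mul_mul_same (1 - B)
    rw [hpos_plus.isHermitian.eq] at h₁
    rw [hpos_minus.isHermitian.eq] at h₂
    have h := (h₁.add h₂).smul (show (0 : ℝ) ≤ 1 / 2 by norm_num)
    convert h using 1
    noncomm_ring
    module
  have hker : ((1 + B) ^ k * (1 - B) ^ k) *ᵥ x = 0 := by
    rw [← hcomm.mul_pow, ← (hpos_mul.pow k).dotProduct_mulVec_zero_iff, hcomm.mul_pow,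
      ← mulVec_mulVec, dotProduct_mulVec, ← (hpos_plus.pow k).isHermitian.eq, ← star_mulVec,
      star_trivial]
    refine Finset.sum_eq_zero fun i _ => ?_
    rcases hall i with h | h <;> simp [h]
  have hlow_zero : ((1 + B) ^ k) *ᵥ x = 0 := by
    have hker_low : (1 - B) *ᵥ (((1 + B) ^ k) *ᵥ x) = 0 := by
      refine hpos_minus.isHermitian.mulVec_eq_zero_of_pow_mulVec_eq_zero (k := k) ?_
      rw [mulVec_mulVec, ← (hcomm.pow_pow k k).eq, hker]
    rw [hminus] at hker_low
    exact funext <| hconn _ (fun i j hij => eq_zero_of_one_add_smul_mulVec_eq_zero hsymm hnonneg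
      hrow (by norm_num) hker_low hij) hlow
  have hhigh_zero : ((1 - B) ^ k) *ᵥ x = 0 := by
    have hker_high : (1 + B) *ᵥ (((1 - B) ^ k) *ᵥ x) = 0 := by
      refine hpos_plus.isHermitian.mulVec_eq_zero_of_pow_mulVec_eq_zero (k := k) ?_
      rw [mulVec_mulVec, hker]
    rw [hplus] at hker_high
    exact funext <| hconn _ (fun i j hij => eq_zero_of_one_add_smul_mulVec_eq_zero hsymm hnonneg
      hrow (by norm_num) hker_high hij) hhigh
  have h₁ := hpos_plus.isHermitian.mulVec_eq_zero_of_pow_mulVec_eq_zero hlow_zero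
  have h₂ := hpos_minus.isHermitian.mulVec_eq_zero_of_pow_mulVec_eq_zero hhigh_zero
  rw [add_mulVec, one_mulVec] at h₁
  rw [sub_mulVec, one_mulVec] at h₂
  funext i
  have h₁i := congrFun h₁ i
  have h₂i := congrFun h₂ i
  simp only [Pi.add_apply, Pi.sub_apply, Pi.zero_apply] at h₁i h₂i ⊢
  linarith

end StochasticFilters

section Circulant

variable {N : ℕ} {S : Finset ℕ} {w : ℕ → ℝ}

/-- The vertex of the circulant graph represented by an integer. -/
def circVertex (N : ℕ) [NeZero N] (a : ℤ) : Fin N :=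
  ⟨(a % N).toNat, by
    have hN : (0 : ℤ) < N := by exact_mod_cast NeZero.pos N
    have := Int.emod_lt_of_pos a hN
    have := Int.emod_nonneg a hN.ne'
    omega⟩

theorem coe_circVertex [NeZero N] (a : ℤ) : ((circVertex N a : ℕ) : ℤ) = a % N :=
  Int.toNat_of_nonneg (Int.emod_nonneg a (by exact_mod_cast NeZero.ne N))

theorem circVertex_coe [NeZero N] (i : Fin N) : circVertex N (i : ℤ) = i := by
  apply Fin.ext
  have h := coe_circVertex (N := N) (i : ℤ)
  rw [Int.emod_eq_of_lt (by positivity) (by exact_mod_cast i.2)] at h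
  exact_mod_cast h

theorem circVertex_eq_iff [NeZero N] {a b : ℤ} :
    circVertex N a = circVertex N b ↔ a % N = b % N := by
  rw [← coe_circVertex, ← coe_circVertex, Fin.ext_iff, Nat.cast_inj]

theorem sub_emod_eq_iff [NeZero N] (i j : Fin N) (a : ℤ) :
    ((i : ℤ) - (j : ℤ)) % (N : ℤ) = a % (N : ℤ) ↔ circVertex N (i - a) = j := by
  conv_rhs => rw [← circVertex_coe j, circVertex_eq_iff]
  rw [Int.emod_eq_emod_iff_emod_sub_eq_zero, Int.emod_eq_emod_iff_emod_sub_eq_zero,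
    sub_right_comm]

theorem circAdj_symm (i j : Fin N) : circAdj N S w i j = circAdj N S w j i := by
  have hneg : ∀ a b : ℤ, a % N = b % N ↔ (-a) % N = (-b) % N := fun a b =>
    ⟨fun h => Int.ModEq.neg h, fun h => by
      simpa only [neg_neg] using (Int.ModEq.neg h : - -a ≡ - -b [ZMOD N]).eq⟩
  refine Finset.sum_congr rfl fun s _ => if_congr ?_ rfl rfl
  rw [hneg ((i : ℤ) - j) s, hneg ((i : ℤ) - j) (-s), neg_sub, neg_neg, or_comm]

theorem circAdj_nonneg (hw : ∀ s ∈ S, 0 < w s) (i j : Fin N) : 0 ≤ circAdj N S w i j :=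
  Finset.sum_nonneg fun s hs => by
    split_ifs
    exacts [(hw s hs).le, le_rfl]

theorem sum_circAdj (hS : ∀ s ∈ S, 1 ≤ s ∧ 2 * s ≤ N - 1) (i : Fin N) :
    ∑ j, circAdj N S w i j = ∑ s ∈ S, 2 * w s := by
  have : NeZero N := ⟨by rintro rfl; exact i.elim0⟩
  unfold circAdj
  rw [Finset.sum_comm]
  refine Finset.sum_congr rfl fun s hs => ?_
  obtain ⟨hs₁, hs₂⟩ := hS s hs
  have hne : ¬ ((s : ℤ) % N = (-(s : ℤ)) % N) := fun h => by
    have hdvd : (N : ℤ) ∣ (s : ℤ) - -(s : ℤ) := Int.ModEq.dvd (Eq.symm h)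
    have := Int.le_of_dvd (by omega) hdvd
    omega
  have hsplit : ∀ j : Fin N,
      (if ((i : ℤ) - (j : ℤ)) % (N : ℤ) = (s : ℤ) % (N : ℤ) ∨
          ((i : ℤ) - (j : ℤ)) % (N : ℤ) = (-(s : ℤ)) % (N : ℤ) then w s else 0) =
        (if circVertex N (i - s) = j then w s else 0) +
          (if circVertex N (i - -s) = j then w s else 0) := fun j => by
    simp only [← sub_emod_eq_iff]
    split_ifs <;> grind
  simp_rw [hsplit, Finset.sum_add_distrib, Finset.sum_ite_eq, Finset.mem_univ, if_true]
  ring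

theorem circAdj_pos (hw : ∀ s ∈ S, 0 < w s) {s : ℕ} (hs : s ∈ S) {i j : Fin N}
    (hij : ((i : ℤ) - (j : ℤ)) % (N : ℤ) = (s : ℤ) % (N : ℤ)) : 0 < circAdj N S w i j := by
  refine Finset.sum_pos' (fun t ht => ?_) ⟨s, hs, ?_⟩
  · split_ifs
    exacts [(hw t ht).le, le_rfl]
  · rw [if_pos (Or.inl hij)]
    exact hw s hs

/-- A subgroup of `ℤ` containing integers with greatest common divisor `1` is everything. -/
theorem AddSubgroup.one_mem_of_gcd_eq_one (H : AddSubgroup ℤ) (hS : ∀ s ∈ S, (s : ℤ) ∈ H)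
    (hN : (N : ℤ) ∈ H) (hgcd : Nat.gcd (S.gcd id) N = 1) : (1 : ℤ) ∈ H := by
  obtain ⟨a, rfl⟩ := Int.subgroup_cyclic H
  rw [← AddSubgroup.zmultiples_eq_closure] at *
  simp only [Int.mem_zmultiples_iff] at *
  rw [← Int.natAbs_dvd] at hN ⊢
  have hdvd : a.natAbs ∣ Nat.gcd (S.gcd id) N :=
    Nat.dvd_gcd (Finset.dvd_gcd fun s hs => Int.natCast_dvd_natCast.1 (Int.natAbs_dvd.2 (hS s hs)))
      (Int.natCast_dvd_natCast.1 hN)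
  rw [hgcd] at hdvd
  exact_mod_cast hdvd

/-- A predicate on vertices stable under adjacency and satisfied somewhere holds everywhere. -/
theorem circAdj_connected (hw : ∀ s ∈ S, 0 < w s) (hconn : Nat.gcd (S.gcd id) N = 1)
    (p : Fin N → Prop) (hp : ∀ i j, 0 < circAdj N S w i j → p i → p j) (hex : ∃ i, p i)
    (i : Fin N) : p i := by
  have : NeZero N := ⟨by rintro rfl; exact i.elim0⟩
  let H : AddSubgroup ℤ :=
    { carrier := {g | ∀ a, p (circVertex N (a + g)) ↔ p (circVertex N a)}
      zero_mem' := fun a => by rw [add_zero]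
      add_mem' := fun {g h} hg hh a => by rw [← add_assoc, hh, hg]
      neg_mem' := fun {g} hg a => by rw [← hg (a + -g), neg_add_cancel_right] }
  have hSH : ∀ s ∈ S, (s : ℤ) ∈ H := fun s hs a => by
    have hadj : 0 < circAdj N S w (circVertex N (a + s)) (circVertex N a) := by
      refine circAdj_pos hw hs ?_
      rw [coe_circVertex, coe_circVertex, ← Int.sub_emod, add_sub_cancel_left]
    exact ⟨hp _ _ hadj, hp _ _ (circAdj_symm (S := S) (w := w) _ _ ▸ hadj)⟩
  have hNH : (N : ℤ) ∈ H := fun a => by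
    rw [circVertex_eq_iff.2 (Int.add_emod_right a N)]
  have hone := H.one_mem_of_gcd_eq_one hSH hNH hconn
  obtain ⟨j, hj⟩ := hex
  have hmem : (i : ℤ) - j ∈ H := by
    simpa using H.zsmul_mem hone ((i : ℤ) - j)
  have h := (hmem j).2 (by rwa [circVertex_coe])
  rwa [add_sub_cancel, circVertex_coe] at h

end Circulant

/-- the one-level HGSWT filterbank on a connected circulant graph is
invertible for any downsampling pattern, as long as at least one node retains the low-pass
component and the complementary (nonempty) set of nodes retains the high-pass components. -/
theorem hgswt_filterbank_invertible
    (N : ℕ) (S : Finset ℕ) (w : ℕ → ℝ)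
    (hS : ∀ s ∈ S, 1 ≤ s ∧ 2 * s ≤ N - 1)
    (hw : ∀ s ∈ S, 0 < w s)
    (hconn : Nat.gcd (S.gcd id) N = 1)
    (k : ℕ) (hk : 1 ≤ k)
    (A : Matrix (Fin N) (Fin N) ℝ) (hA : A = circAdj N S w)
    (HLP HHP : Matrix (Fin N) (Fin N) ℝ)
    (hHLP : HLP = (1 / 2 ^ k : ℝ) •
      ((1 : Matrix (Fin N) (Fin N) ℝ) + (∑ s ∈ S, 2 * w s)⁻¹ • A) ^ k)
    (hHHP : HHP = (1 / 2 ^ k : ℝ) •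
      ((1 : Matrix (Fin N) (Fin N) ℝ) - (∑ s ∈ S, 2 * w s)⁻¹ • A) ^ k)
    (K : Matrix (Fin N) (Fin N) ℝ)
    (hKdiag : ∀ a b : Fin N, a ≠ b → K a b = 0)
    (hKpm : ∀ a : Fin N, K a a = 1 ∨ K a a = -1)
    (hKlp : ∃ a : Fin N, K a a = 1)
    (hKhp : ∃ a : Fin N, K a a = -1)
    (W : Matrix (Fin N) (Fin N) ℝ)
    (hW : W = (1 / 2 : ℝ) • ((1 + K) * HLP) + (1 / 2 : ℝ) • ((1 - K) * HHP)) :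
    IsUnit W := by
  obtain ⟨a₁, ha₁⟩ := hKlp
  obtain ⟨a₂, ha₂⟩ := hKhp
  set d : ℝ := ∑ s ∈ S, 2 * w s
  have hSne : S.Nonempty := by
    rw [Finset.nonempty_iff_ne_empty]
    rintro rfl
    rw [Finset.gcd_empty, Nat.gcd_zero_left] at hconn
    subst hconn
    rw [Subsingleton.elim a₂ a₁, ha₁] at ha₂
    norm_num at ha₂
  have hdpos : 0 < d := Finset.sum_pos (fun s hs => mul_pos two_pos (hw s hs)) hSne
  have hB : ∀ i j, (d⁻¹ • A) i j = d⁻¹ * circAdj N S w i j := fun i j => by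
    rw [hA, Matrix.smul_apply, smul_eq_mul]
  have hc : (1 / 2 ^ k : ℝ) ≠ 0 := by positivity
  have hK : K = Matrix.diagonal fun a => K a a := by
    ext a b
    by_cases hab : a = b
    · rw [hab, Matrix.diagonal_apply_eq]
    · rw [hKdiag a b hab, Matrix.diagonal_apply_ne _ hab]
  have hWx : ∀ (x : Fin N → ℝ) (a : Fin N), (W *ᵥ x) a =
      (1 / 2) * ((1 + K a a) * (HLP *ᵥ x) a) + (1 / 2) * ((1 - K a a) * (HHP *ᵥ x) a) := by
    intro x a
    have hKx : ∀ v : Fin N → ℝ, (K *ᵥ v) a = K a a * v a := fun v => by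
      conv_lhs => rw [hK]
      exact Matrix.mulVec_diagonal _ _ _
    rw [hW, Matrix.add_mulVec, Matrix.smul_mulVec, Matrix.smul_mulVec, ← Matrix.mulVec_mulVec,
      ← Matrix.mulVec_mulVec, Matrix.add_mulVec, Matrix.sub_mulVec, Matrix.one_mulVec,
      Matrix.one_mulVec]
    simp only [Pi.add_apply, Pi.sub_apply, Pi.smul_apply, smul_eq_mul, hKx]
    ring
  rw [← Matrix.mulVec_injective_iff_isUnit]
  refine (injective_iff_map_eq_zero W.mulVecLin).2 fun x hx => ?_
  have hx' : ∀ a, (W *ᵥ x) a = 0 := congrFun hx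
  have hlow : ∀ a, K a a = 1 → (((1 + d⁻¹ • A) ^ k) *ᵥ x) a = 0 := fun a ha => by
    have h := hx' a
    rw [hWx, ha, hHLP, Matrix.smul_mulVec, Pi.smul_apply, smul_eq_mul] at h
    refine (mul_eq_zero.1 (?_ : (1 / 2 ^ k : ℝ) * _ = 0)).resolve_left hc
    linarith
  have hhigh : ∀ a, K a a = -1 → (((1 - d⁻¹ • A) ^ k) *ᵥ x) a = 0 := fun a ha => by
    have h := hx' a
    rw [hWx, ha, hHHP, Matrix.smul_mulVec, Pi.smul_apply, smul_eq_mul] at h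
    refine (mul_eq_zero.1 (?_ : (1 / 2 ^ k : ℝ) * _ = 0)).resolve_left hc
    linarith
  refine eq_zero_of_lowPass_or_highPass_eq_zero (B := d⁻¹ • A) (k := k) ?_ ?_ ?_ ?_
    (fun a => (hKpm a).imp (hlow a) (hhigh a)) ⟨a₁, hlow a₁ ha₁⟩ ⟨a₂, hhigh a₂ ha₂⟩
  · intro i j
    rw [hB, hB, circAdj_symm]
  · intro i j
    rw [hB]
    exact mul_nonneg (inv_nonneg.2 hdpos.le) (circAdj_nonneg hw i j)
  · intro i
    simp_rw [hB]
    rw [← Finset.mul_sum, sum_circAdj hS, inv_mul_cancel₀ hdpos.ne']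
  · intro p hp
    refine circAdj_connected hw hconn p fun i j hij => hp i j ?_
    rw [hB]
    exact mul_pos (inv_pos.2 hdpos) hij
end

section
/- Let A be the adjacency matrix of an undirected circulant graph on N vertices with generating set S, positive weights (d_s)_{s∈S}, degree d per node and bandwidth B. Let ᾱ = (α_1,…,α_T) with β_n = d̃_{α_n}/d, let k ≥ 1 with 2TkB < N, and let H_HP = ∏_{n=1}^T (1/2^k)(β_n I_N − A/d)^k be the HGESWT high-pass filter. Then H_HP annihilates complex exponential polynomial graph signals with exponent ±iα_n: for every m ∈ {1,…,T}, every polynomial p of degree at most k−1, and either sign choice, the graph signal x ∈ ℂ^N with x_j = p(j)·e^{±iα_m j} satisfies (H_HP x)_i = 0 for every index i with TkB ≤ i ≤ N−1−TkB. -/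
open Polynomial in
/-- The signal `x` agrees with `q(j)·e^{iθj}`, for some polynomial `q` of degree less than `D`,
at all vertices at distance at least `r` from the border. -/
def IsExpPolyInside {N : ℕ} (θ : ℝ) (r D : ℕ) (x : Fin N → ℂ) : Prop :=
  ∃ q ∈ degreeLT ℂ D, ∀ i : Fin N, r ≤ (i : ℕ) → (i : ℕ) + r < N →
    x i = q.eval ((i : ℕ) : ℂ) * Complex.exp (Complex.I * ((θ * (i : ℕ) : ℝ) : ℂ))

/-- The high-pass factor `b I - A / d`. -/
noncomputable def highpassFactor (N : ℕ) (S : Finset ℕ) (w : ℕ → ℝ) (b : ℝ) :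
    Matrix (Fin N) (Fin N) ℂ :=
  (b : ℂ) • (1 : Matrix (Fin N) (Fin N) ℂ)
    - (((∑ s ∈ S, 2 * w s : ℝ) : ℂ))⁻¹ • (circAdj N S w).map Complex.ofReal

lemma circAdj_apply_of_interior {N : ℕ} {S : Finset ℕ} {w : ℕ → ℝ}
    (hS : ∀ s ∈ S, 1 ≤ s) (i j : Fin N)
    (hlow : ∀ s ∈ S, s ≤ (i : ℕ)) (hhigh : ∀ s ∈ S, (i : ℕ) + s < N) :
    circAdj N S w i j = ∑ s ∈ S,
      ((if (j : ℕ) = i + s then w s else 0) + if (j : ℕ) = i - s then w s else 0) := by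
  unfold circAdj
  refine Finset.sum_congr rfl fun s hs => ?_
  have h1 := hS s hs
  have h2 := hlow s hs
  have h3 := hhigh s hs
  have hi := i.isLt
  have hj := j.isLt
  have hminus : ((i : ℤ) - (j : ℤ)) % (N : ℤ) = (s : ℤ) % (N : ℤ) ↔ (j : ℕ) = i - s := by
    refine ⟨fun h => ?_, fun h => by rw [h, Nat.cast_sub h2]; ring_nf⟩
    obtain ⟨c, hc⟩ := Int.ModEq.dvd h
    obtain rfl : c = 0 := by
      have : c < 1 := by nlinarith
      have : -1 < c := by nlinarith
      omega
    omega
  have hplus : ((i : ℤ) - (j : ℤ)) % (N : ℤ) = (-(s : ℤ)) % (N : ℤ) ↔ (j : ℕ) = i + s := by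
    refine ⟨fun h => ?_, fun h => by rw [h]; push_cast; ring_nf⟩
    obtain ⟨c, hc⟩ := Int.ModEq.dvd h
    obtain rfl : c = 0 := by
      have : c < 1 := by nlinarith
      have : -1 < c := by nlinarith
      omega
    omega
  simp only [hminus, hplus]
  split_ifs <;> first | omega | simp

lemma circAdj_mulVec_of_interior {N : ℕ} {S : Finset ℕ} {w : ℕ → ℝ}
    (hS : ∀ s ∈ S, 1 ≤ s) (i : Fin N)
    (hlow : ∀ s ∈ S, s ≤ (i : ℕ)) (hhigh : ∀ s ∈ S, (i : ℕ) + s < N)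
    (x : Fin N → ℂ) (f : ℤ → ℂ)
    (hplus : ∀ s ∈ S, ∀ j : Fin N, (j : ℕ) = i + s → x j = f (i + s))
    (hminus : ∀ s ∈ S, ∀ j : Fin N, (j : ℕ) = i - s → x j = f (i - s)) :
    ((circAdj N S w).map Complex.ofReal).mulVec x i =
      ∑ s ∈ S, (w s : ℂ) * (f (i + s) + f (i - s)) := by
  simp only [Matrix.mulVec, dotProduct, Matrix.map_apply,
    circAdj_apply_of_interior hS i _ hlow hhigh, Complex.ofReal_sum, Finset.sum_mul]
  rw [Finset.sum_comm]
  refine Finset.sum_congr rfl fun s hs => ?_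
  have hh := hhigh s hs
  have hl := hlow s hs
  have hp : ∀ j : Fin N, (j : ℕ) = i + s ↔ j = ⟨i + s, hh⟩ := fun j => by simp [Fin.ext_iff]
  have hm : ∀ j : Fin N, (j : ℕ) = i - s ↔ j = ⟨i - s, by omega⟩ :=
    fun j => by simp [Fin.ext_iff]
  simp only [hp, hm, Complex.ofReal_add, add_mul, Finset.sum_add_distrib, apply_ite Complex.ofReal,
    Complex.ofReal_zero, ite_mul, zero_mul, Finset.sum_ite_eq',
    Finset.mem_univ, if_true, mul_add]
  rw [hplus s hs _ rfl, hminus s hs _ rfl]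

open Polynomial in
lemma taylor_sub_self_mem_degreeLT {D : ℕ} {q : ℂ[X]} (hq : q ∈ degreeLT ℂ (D + 1)) (a : ℂ) :
    taylor a q - q ∈ degreeLT ℂ D := by
  rcases eq_or_ne q 0 with rfl | h0
  · simp
  rw [mem_degreeLT] at hq ⊢
  have hlt : (taylor a q - q).degree < (taylor a q).degree :=
    degree_sub_lt_left (degree_taylor q a) (by simpa using h0) (by simp)
  rw [degree_taylor] at hlt
  rw [degree_eq_natDegree h0] at hlt hq
  have hD : q.natDegree ≤ D := by
    have : q.natDegree < D + 1 := by exact_mod_cast hq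
    omega
  exact hlt.trans_le (by exact_mod_cast hD)

namespace IsExpPolyInside

variable {N : ℕ} {θ : ℝ} {r D : ℕ} {x : Fin N → ℂ}

lemma mono {D' : ℕ} (h : IsExpPolyInside θ r D x) (hD : D ≤ D') : IsExpPolyInside θ r D' x := by
  obtain ⟨q, hq, hx⟩ := h
  exact ⟨q, Polynomial.degreeLT_mono hD hq, hx⟩

lemma smul (h : IsExpPolyInside θ r D x) (c : ℂ) : IsExpPolyInside θ r D (c • x) := by
  obtain ⟨q, hq, hx⟩ := h
  refine ⟨c • q, Submodule.smul_mem _ c hq, fun i h1 h2 => ?_⟩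
  simp [hx i h1 h2, mul_assoc]

open Polynomial in
/-- The polynomial part of the image of an exponential polynomial under a high-pass factor: the
symbol of the factor times the polynomial, plus terms of lower degree. -/
lemma highpassFactor_mulVec_eq {S : Finset ℕ} {w : ℕ → ℝ} {B : ℕ} (hS : ∀ s ∈ S, 1 ≤ s ∧ s ≤ B)
    (b : ℝ) (h : IsExpPolyInside θ r D x) :
    ∃ q ∈ degreeLT ℂ D, ∃ l : ℂ[X], (∀ D', D ≤ D' + 1 → l ∈ degreeLT ℂ D') ∧
      ∀ i : Fin N, r + B ≤ (i : ℕ) → (i : ℕ) + (r + B) < N →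
        (highpassFactor N S w b).mulVec x i =
          (((b - (∑ s ∈ S, 2 * w s * Real.cos (θ * s)) / (∑ s ∈ S, 2 * w s) : ℝ) : ℂ) • q
            + l).eval ((i : ℕ) : ℂ) * Complex.exp (Complex.I * ((θ * (i : ℕ) : ℝ) : ℂ)) := by
  obtain ⟨q, hq, hx⟩ := h
  refine ⟨q, hq, -((((∑ s ∈ S, 2 * w s : ℝ) : ℂ))⁻¹ • ∑ s ∈ S, (w s : ℂ) •
    (Complex.exp (Complex.I * ((θ * s : ℝ) : ℂ)) • (taylor (s : ℂ) q - q)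
      + Complex.exp (-(Complex.I * ((θ * s : ℝ) : ℂ))) • (taylor (-s : ℂ) q - q))), ?_, ?_⟩
  · intro D' hD
    have hq' := degreeLT_mono hD hq
    refine neg_mem (Submodule.smul_mem _ _ (sum_mem fun s _ => Submodule.smul_mem _ _ ?_))
    exact add_mem (Submodule.smul_mem _ _ (taylor_sub_self_mem_degreeLT hq' _))
      (Submodule.smul_mem _ _ (taylor_sub_self_mem_degreeLT hq' _))
  · intro i h1 h2
    have hadj := circAdj_mulVec_of_interior (w := w) (fun s hs => (hS s hs).1) i
      (fun s hs => by have := (hS s hs).2; omega) (fun s hs => by have := (hS s hs).2; omega) x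
      (fun j => q.eval (j : ℂ) * Complex.exp (Complex.I * ((θ * j : ℝ) : ℂ)))
      (fun s hs j hj => by
        have := (hS s hs).2
        rw [hx j (by omega) (by omega), hj]
        push_cast
        rfl)
      (fun s hs j hj => by
        have := (hS s hs).2
        rw [hx j (by omega) (by omega), hj, Nat.cast_sub (by omega), Nat.cast_sub (by omega)]
        push_cast
        rfl)
    rw [highpassFactor, Matrix.sub_mulVec, Matrix.smul_mulVec, Matrix.smul_mulVec,
      Matrix.one_mulVec, Pi.sub_apply, Pi.smul_apply, Pi.smul_apply, hadj,
      hx i (by omega) (by omega)]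
    have hterm : ∀ s : ℕ, (w s : ℂ) *
        (q.eval (((i + s : ℤ)) : ℂ) * Complex.exp (Complex.I * ((θ * (i + s : ℤ) : ℝ) : ℂ))
          + q.eval (((i - s : ℤ)) : ℂ) * Complex.exp (Complex.I * ((θ * (i - s : ℤ) : ℝ) : ℂ)))
        = (((2 * w s * Real.cos (θ * s) : ℝ) : ℂ) * q.eval ((i : ℕ) : ℂ) + ((w s : ℂ) •
          (Complex.exp (Complex.I * ((θ * s : ℝ) : ℂ)) • (taylor (s : ℂ) q - q)
            + Complex.exp (-(Complex.I * ((θ * s : ℝ) : ℂ))) • (taylor (-s : ℂ) q - q))).eval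
          ((i : ℕ) : ℂ)) * Complex.exp (Complex.I * ((θ * (i : ℕ) : ℝ) : ℂ)) := by
      intro s
      have hcos : ((2 * w s * Real.cos (θ * s) : ℝ) : ℂ) = w s *
          (Complex.exp (Complex.I * ((θ * s : ℝ) : ℂ))
            + Complex.exp (-(Complex.I * ((θ * s : ℝ) : ℂ)))) := by
        push_cast [Complex.cos]
        ring_nf
      have hadd : Complex.exp (Complex.I * ((θ * (i + s : ℤ) : ℝ) : ℂ)) =
          Complex.exp (Complex.I * ((θ * (i : ℕ) : ℝ) : ℂ)) *
            Complex.exp (Complex.I * ((θ * s : ℝ) : ℂ)) := by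
        rw [← Complex.exp_add]
        push_cast
        ring_nf
      have hsub : Complex.exp (Complex.I * ((θ * (i - s : ℤ) : ℝ) : ℂ)) =
          Complex.exp (Complex.I * ((θ * (i : ℕ) : ℝ) : ℂ)) *
            Complex.exp (-(Complex.I * ((θ * s : ℝ) : ℂ))) := by
        rw [← Complex.exp_add]
        push_cast
        ring_nf
      rw [hcos, hadd, hsub]
      simp only [eval_smul, eval_add, eval_sub, taylor_eval, smul_eq_mul, Int.cast_add,
        Int.cast_sub, Int.cast_natCast, ← sub_eq_add_neg]
      ring
    rw [Finset.sum_congr rfl fun s _ => hterm s, ← Finset.sum_mul, Finset.sum_add_distrib,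
      ← Finset.sum_mul, eval_add, eval_neg, eval_smul, eval_smul, eval_finsetSum,
      Complex.ofReal_sub, Complex.ofReal_div, Complex.ofReal_sum S fun s => 2 * w s * _]
    simp only [smul_eq_mul]
    ring

lemma highpassFactor_mulVec {S : Finset ℕ} {w : ℕ → ℝ} {B : ℕ} (hS : ∀ s ∈ S, 1 ≤ s ∧ s ≤ B)
    (b : ℝ) (h : IsExpPolyInside θ r D x) :
    IsExpPolyInside θ (r + B) D ((highpassFactor N S w b).mulVec x) := by
  obtain ⟨q, hq, l, hl, hx⟩ := h.highpassFactor_mulVec_eq hS b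
  exact ⟨_, add_mem (Submodule.smul_mem _ _ hq) (hl D (Nat.le_succ D)), hx⟩

/-- A high-pass factor whose symbol vanishes at `θ` lowers the degree. -/
lemma highpassFactor_mulVec_of_eq {S : Finset ℕ} {w : ℕ → ℝ} {B : ℕ}
    (hS : ∀ s ∈ S, 1 ≤ s ∧ s ≤ B) {b : ℝ}
    (hb : b = (∑ s ∈ S, 2 * w s * Real.cos (θ * s)) / (∑ s ∈ S, 2 * w s))
    (h : IsExpPolyInside θ r D x) :
    IsExpPolyInside θ (r + B) (D - 1) ((highpassFactor N S w b).mulVec x) := by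
  obtain ⟨q, -, l, hl, hx⟩ := h.highpassFactor_mulVec_eq hS b
  refine ⟨l, hl _ (by omega), fun i h1 h2 => ?_⟩
  rw [hx i h1 h2, ← hb, sub_self, Complex.ofReal_zero, zero_smul, zero_add]

lemma highpassFactor_pow_mulVec {S : Finset ℕ} {w : ℕ → ℝ} {B : ℕ}
    (hS : ∀ s ∈ S, 1 ≤ s ∧ s ≤ B) (b : ℝ) (h : IsExpPolyInside θ r D x) (k : ℕ) :
    IsExpPolyInside θ (r + k * B) D ((highpassFactor N S w b ^ k).mulVec x) := by
  induction k with
  | zero => simpa using h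
  | succ k ih =>
    rw [pow_succ', ← Matrix.mulVec_mulVec, Nat.succ_mul, ← add_assoc]
    exact ih.highpassFactor_mulVec hS b

lemma highpassFactor_pow_mulVec_of_eq {S : Finset ℕ} {w : ℕ → ℝ} {B : ℕ}
    (hS : ∀ s ∈ S, 1 ≤ s ∧ s ≤ B) {b : ℝ}
    (hb : b = (∑ s ∈ S, 2 * w s * Real.cos (θ * s)) / (∑ s ∈ S, 2 * w s))
    (h : IsExpPolyInside θ r D x) (k : ℕ) :
    IsExpPolyInside θ (r + k * B) (D - k) ((highpassFactor N S w b ^ k).mulVec x) := by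
  induction k with
  | zero => simpa using h
  | succ k ih =>
    rw [pow_succ', ← Matrix.mulVec_mulVec, Nat.succ_mul, ← add_assoc, ← Nat.sub_sub]
    exact ih.highpassFactor_mulVec_of_eq hS hb

lemma highpass_prod_mulVec {ι : Type*} [DecidableEq ι] {S : Finset ℕ} {w : ℕ → ℝ} {B : ℕ}
    (hS : ∀ s ∈ S, 1 ≤ s ∧ s ≤ B) (β : ι → ℝ) (m : ι)
    (hb : β m = (∑ s ∈ S, 2 * w s * Real.cos (θ * s)) / (∑ s ∈ S, 2 * w s))
    (c : ℂ) (k : ℕ) (h : IsExpPolyInside θ 0 k x) (L : List ι) :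
    IsExpPolyInside θ (L.length * k * B) (if m ∈ L then 0 else k)
      ((L.map fun n => c • highpassFactor N S w (β n) ^ k).prod.mulVec x) := by
  induction L with
  | nil => simpa using h
  | cons n L ih =>
    rw [List.map_cons, List.prod_cons, ← Matrix.mulVec_mulVec, Matrix.smul_mulVec,
      List.length_cons, Nat.succ_mul, add_mul]
    refine smul ?_ c
    rcases eq_or_ne m n with rfl | hmn
    · refine (ih.highpassFactor_pow_mulVec_of_eq hS hb k).mono ?_
      split_ifs <;> simp_all
    · simpa [hmn] using ih.highpassFactor_pow_mulVec hS (β n) k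

end IsExpPolyInside

/-- the HGESWT high-pass filter annihilates complex exponential polynomial
graph signals `x j = p(j)·e^{±iα_m j}` with `deg p ≤ k−1`, up to a border effect of size
`TkB`. -/
theorem hgeswt_highpass_annihilates_exponential_polynomials
    (N : ℕ) (S : Finset ℕ) (w : ℕ → ℝ)
    (hS : ∀ s ∈ S, 1 ≤ s ∧ 2 * s ≤ N - 1)
    (hw : ∀ s ∈ S, 0 < w s) (hSne : S.Nonempty)
    (B : ℕ) (hBS : B ∈ S) (hBmax : ∀ s ∈ S, s ≤ B)
    (T : ℕ) (α : Fin T → ℝ)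
    (β : Fin T → ℝ)
    (hβ : ∀ n : Fin T, β n =
      (∑ s ∈ S, 2 * w s * Real.cos (α n * s)) / (∑ s ∈ S, 2 * w s))
    (k : ℕ) (hk : 1 ≤ k) (hTkB : 2 * (T * k * B) < N)
    (A : Matrix (Fin N) (Fin N) ℝ) (hA : A = circAdj N S w)
    (H : Matrix (Fin N) (Fin N) ℂ)
    (hH : H = ((List.finRange T).map (fun n =>
      (1 / 2 ^ k : ℂ) • (((β n : ℝ) : ℂ) • (1 : Matrix (Fin N) (Fin N) ℂ)
        - (((∑ s ∈ S, 2 * w s : ℝ) : ℂ))⁻¹ • A.map Complex.ofReal) ^ k)).prod)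
    (m : Fin T) (p : Polynomial ℂ) (hp : p.natDegree ≤ k - 1)
    (ε : ℝ) (hε : ε = 1 ∨ ε = -1)
    (x : Fin N → ℂ)
    (hx : ∀ j : Fin N, x j = p.eval ((j : ℕ) : ℂ) *
      Complex.exp (Complex.I * ((ε * α m * (j : ℕ) : ℝ) : ℂ)))
    (i : Fin N) (hi1 : T * k * B ≤ (i : ℕ)) (hi2 : (i : ℕ) ≤ N - 1 - T * k * B) :
    H.mulVec x i = 0 := by
  subst hA hH
  have hS' : ∀ s ∈ S, 1 ≤ s ∧ s ≤ B := fun s hs => ⟨(hS s hs).1, hBmax s hs⟩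
  have hb : β m = (∑ s ∈ S, 2 * w s * Real.cos (ε * α m * s)) / (∑ s ∈ S, 2 * w s) := by
    rw [hβ m]
    rcases hε with rfl | rfl <;> simp
  have hx0 : IsExpPolyInside (ε * α m) 0 k x := by
    refine ⟨p, Polynomial.mem_degreeLT.2 ?_, fun j _ _ => hx j⟩
    exact Polynomial.degree_le_natDegree.trans_lt (by exact_mod_cast (by omega))
  obtain ⟨q, hq, hqx⟩ := hx0.highpass_prod_mulVec hS' β m hb (1 / 2 ^ k) k (List.finRange T)
  rw [List.length_finRange] at hqx
  have hq0 : q = 0 := by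
    simpa [Polynomial.mem_degreeLT] using hq
  have := hqx i hi1 (by omega)
  rw [hq0, Polynomial.eval_zero, zero_mul] at this
  exact this
end

section
/- Let A be the adjacency matrix of an undirected, connected circulant graph on N vertices with degree d per node, let ᾱ = (α_1,…,α_T) with β_n = d̃_{α_n}/d, let k ≥ 1, and let H_LP = ∏_{n=1}^T (1/2^k)(β_n I + A/d)^k and H_HP = ∏_{n=1}^T (1/2^k)(β_n I − A/d)^k be the HGESWT filters. Suppose every eigenvalue γ of A/d satisfies |β_n| ≠ |γ| for all n = 1,…,T, and suppose either (i) k is even, or (ii) the quantity f(γ) = ∏_{n=1}^T (β_n² − γ²)^k has the same (strict) sign for all eigenvalues γ of A/d. Then for every diagonal downsampling matrix K with diagonal entries in {+1,−1}, the one-level filterbank matrix W = (1/2)(I_N + K)·H_LP + (1/2)(I_N − K)·H_HP is invertible. -/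
open Polynomial in
/-- A real polynomial that is positive on the spectrum of a symmetric matrix takes a positive
definite value at that matrix. -/
theorem posDef_aeval_of_eval_pos {n : Type*} [Fintype n] [DecidableEq n] {B : Matrix n n ℝ}
    (hB : B.IsHermitian) (r : ℝ[X]) (hr : ∀ γ ∈ spectrum ℝ B, 0 < r.eval γ) :
    (aeval B r).PosDef := by
  have hB' : IsSelfAdjoint B := hB
  rw [← cfc_polynomial r B hB']
  have hM : (cfc r.eval B).IsHermitian := cfc_predicate (p := IsSelfAdjoint) r.eval B
  rw [hM.posDef_iff_eigenvalues_pos]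
  intro i
  have hi := hM.eigenvalues_mem_spectrum_real i
  rw [cfc_map_spectrum r.eval B hB' r.continuous.continuousOn] at hi
  obtain ⟨γ, hγ, hγi⟩ := hi
  exact hγi ▸ hr γ hγ

open Polynomial in
theorem isHermitian_aeval {n : Type*} [Fintype n] [DecidableEq n] {B : Matrix n n ℝ}
    (hB : B.IsHermitian) (p : ℝ[X]) : (aeval B p).IsHermitian := by
  have hB' : IsSelfAdjoint B := hB
  rw [← cfc_polynomial p B hB']
  exact cfc_predicate (p := IsSelfAdjoint) p.eval B

open Polynomial Matrix in
/-- If `p * q` has constant strict sign on the spectrum of a symmetric matrix, the vectors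
`p(B) x` and `q(B) x` are orthogonal only for `x = 0`. -/
theorem eq_zero_of_aeval_mulVec_dotProduct_eq_zero {n : Type*} [Fintype n] [DecidableEq n]
    {B : Matrix n n ℝ} (hB : B.IsHermitian) (p q : ℝ[X])
    (h : (∀ γ ∈ spectrum ℝ B, 0 < (p * q).eval γ) ∨ ∀ γ ∈ spectrum ℝ B, (p * q).eval γ < 0)
    {x : n → ℝ} (hx : (aeval B p *ᵥ x) ⬝ᵥ (aeval B q *ᵥ x) = 0) : x = 0 := by
  have hsymm : (aeval B p)ᵀ = aeval B p := isHermitian_aeval hB p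
  have hform : x ⬝ᵥ (aeval B (p * q) *ᵥ x) = 0 := by
    rw [map_mul, ← mulVec_mulVec, dotProduct_mulVec, ← mulVec_transpose, hsymm, hx]
  by_contra hne
  rcases h with h | h
  · have := (posDef_aeval_of_eval_pos hB _ h).dotProduct_mulVec_pos hne
    simp only [star_trivial, hform, lt_irrefl] at this
  · have := (posDef_aeval_of_eval_pos hB (-(p * q))
      (by simpa only [eval_neg, neg_pos] using h)).dotProduct_mulVec_pos hne
    simp only [star_trivial, map_neg, neg_mulVec, dotProduct_neg, hform, neg_zero,
      lt_irrefl] at this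

open Matrix in
/-- If a row selection between two filters annihilates `x`, the filter outputs are orthogonal. -/
theorem mulVec_dotProduct_eq_zero_of_filterbank {n : Type*} [Fintype n] [DecidableEq n]
    {L H K : Matrix n n ℝ} (hKdiag : ∀ a b, a ≠ b → K a b = 0)
    (hKpm : ∀ a, K a a = 1 ∨ K a a = -1) {x : n → ℝ}
    (hx : ((1 / 2 : ℝ) • ((1 + K) * L) + (1 / 2 : ℝ) • ((1 - K) * H)) *ᵥ x = 0) :
    (L *ᵥ x) ⬝ᵥ (H *ᵥ x) = 0 := by
  have hK : K = diagonal fun a => K a a := by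
    ext a b
    by_cases hab : a = b
    · subst hab; simp
    · rw [hKdiag a b hab, diagonal_apply_ne _ hab]
  refine Finset.sum_eq_zero fun a _ => ?_
  have ha := congrFun hx a
  rw [hK] at ha
  simp only [add_mulVec, smul_mulVec, ← mulVec_mulVec, sub_mulVec, one_mulVec, Pi.add_apply,
    Pi.sub_apply, Pi.smul_apply, mulVec_diagonal, smul_eq_mul, Pi.zero_apply] at ha
  rcases hKpm a with h | h <;> rw [h] at ha
  · rw [show (L *ᵥ x) a = 0 by linarith, zero_mul]
  · rw [show (H *ᵥ x) a = 0 by linarith, mul_zero]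

theorem circAdj_isHermitian (N : ℕ) (S : Finset ℕ) (w : ℕ → ℝ) :
    (circAdj N S w).IsHermitian := by
  ext i j
  simp only [Matrix.conjTranspose_apply, star_trivial, circAdj]
  refine Finset.sum_congr rfl fun s _ => if_congr ?_ rfl rfl
  have hneg (a b : ℤ) : (-a) % (N : ℤ) = b % N ↔ a % (N : ℤ) = (-b) % N := by
    simp only [Int.emod_eq_emod_iff_emod_sub_eq_zero, ← Int.dvd_iff_emod_eq_zero]
    rw [← dvd_neg, show -(-a - b) = a - -b by ring]
  rw [← neg_sub (i : ℤ) j, hneg, hneg, neg_neg, or_comm]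

/-- invertibility of the one-level HGESWT filterbank, for any downsampling
pattern, provided `|β_n| ≠ |γ|` for all eigenvalues `γ` of `A/d` and either `k` is even or
`f(γ) = ∏_n (β_n² − γ²)^k` has the same strict sign on the spectrum of `A/d`. -/
theorem hgeswt_filterbank_invertible
    (N : ℕ) (S : Finset ℕ) (w : ℕ → ℝ)
    (hS : ∀ s ∈ S, 1 ≤ s ∧ 2 * s ≤ N - 1)
    (hw : ∀ s ∈ S, 0 < w s)
    (hconn : Nat.gcd (S.gcd id) N = 1)
    (T : ℕ) (α : Fin T → ℝ)
    (β : Fin T → ℝ)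
    (hβ : ∀ n : Fin T, β n =
      (∑ s ∈ S, 2 * w s * Real.cos (α n * s)) / (∑ s ∈ S, 2 * w s))
    (k : ℕ) (hk : 1 ≤ k)
    (A : Matrix (Fin N) (Fin N) ℝ) (hA : A = circAdj N S w)
    (HLP HHP : Matrix (Fin N) (Fin N) ℝ)
    (hHLP : HLP = ((List.finRange T).map (fun n =>
      (1 / 2 ^ k : ℝ) • (β n • (1 : Matrix (Fin N) (Fin N) ℝ)
        + (∑ s ∈ S, 2 * w s)⁻¹ • A) ^ k)).prod)
    (hHHP : HHP = ((List.finRange T).map (fun n =>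
      (1 / 2 ^ k : ℝ) • (β n • (1 : Matrix (Fin N) (Fin N) ℝ)
        - (∑ s ∈ S, 2 * w s)⁻¹ • A) ^ k)).prod)
    (hspec : ∀ γ ∈ spectrum ℝ ((∑ s ∈ S, 2 * w s)⁻¹ • A), ∀ n : Fin T, |β n| ≠ |γ|)
    (hsign : Even k ∨
      ((∀ γ ∈ spectrum ℝ ((∑ s ∈ S, 2 * w s)⁻¹ • A),
          0 < ∏ n : Fin T, (β n ^ 2 - γ ^ 2) ^ k) ∨
       (∀ γ ∈ spectrum ℝ ((∑ s ∈ S, 2 * w s)⁻¹ • A),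
          ∏ n : Fin T, (β n ^ 2 - γ ^ 2) ^ k < 0)))
    (K : Matrix (Fin N) (Fin N) ℝ)
    (hKdiag : ∀ a b : Fin N, a ≠ b → K a b = 0)
    (hKpm : ∀ a : Fin N, K a a = 1 ∨ K a a = -1)
    (W : Matrix (Fin N) (Fin N) ℝ)
    (hW : W = (1 / 2 : ℝ) • ((1 + K) * HLP) + (1 / 2 : ℝ) • ((1 - K) * HHP)) :
    IsUnit W := by
  set B := (∑ s ∈ S, 2 * w s)⁻¹ • A
  have hB : B.IsHermitian := by
    have h := circAdj_isHermitian N S w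
    rw [← hA] at h
    exact h.smul (IsSelfAdjoint.all _)
  let p : Polynomial ℝ := ((List.finRange T).map fun n =>
    (1 / 2 ^ k : ℝ) • (Polynomial.C (β n) + Polynomial.X) ^ k).prod
  let q : Polynomial ℝ := ((List.finRange T).map fun n =>
    (1 / 2 ^ k : ℝ) • (Polynomial.C (β n) - Polynomial.X) ^ k).prod
  have hp : HLP = Polynomial.aeval B p := by
    simp [hHLP, p, map_list_prod, Function.comp_def, Algebra.algebraMap_eq_smul_one]
  have hq : HHP = Polynomial.aeval B q := by
    simp [hHHP, q, map_list_prod, Function.comp_def, Algebra.algebraMap_eq_smul_one]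
  have heval (γ : ℝ) : (p * q).eval γ =
      (∏ _n : Fin T, (1 / 2 ^ k : ℝ) ^ 2) * ∏ n : Fin T, (β n ^ 2 - γ ^ 2) ^ k := by
    have hfac (n : Fin T) : (β n ^ 2 - γ ^ 2) ^ k = (β n + γ) ^ k * (β n - γ) ^ k := by
      rw [← mul_pow, ← sq_sub_sq]
    simp only [p, q, ← List.ofFn_eq_map, List.prod_ofFn, Polynomial.eval_mul,
      Polynomial.eval_prod, Polynomial.eval_smul, Polynomial.eval_pow, Polynomial.eval_add,
      Polynomial.eval_sub, Polynomial.eval_C, Polynomial.eval_X, smul_eq_mul, hfac,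
      ← Finset.prod_mul_distrib]
    exact Finset.prod_congr rfl fun n _ => by ring
  have hc : (0 : ℝ) < ∏ _n : Fin T, (1 / 2 ^ k : ℝ) ^ 2 :=
    Finset.prod_pos fun _ _ => by positivity
  have hpq : (∀ γ ∈ spectrum ℝ B, 0 < (p * q).eval γ) ∨
      ∀ γ ∈ spectrum ℝ B, (p * q).eval γ < 0 := by
    simp only [heval]
    rcases hsign with hk | h | h
    · refine Or.inl fun γ hγ => mul_pos hc (Finset.prod_pos fun n _ => hk.pow_pos ?_)
      exact sub_ne_zero.mpr fun h => hspec γ hγ n ((sq_eq_sq_iff_abs_eq_abs _ _).mp h)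
    · exact Or.inl fun γ hγ => mul_pos hc (h γ hγ)
    · exact Or.inr fun γ hγ => mul_neg_of_pos_of_neg hc (h γ hγ)
  rw [← Matrix.mulVec_injective_iff_isUnit, ← Matrix.coe_mulVecLin, injective_iff_map_eq_zero]
  intro x hx
  rw [Matrix.mulVecLin_apply, hW] at hx
  have horth := mulVec_dotProduct_eq_zero_of_filterbank hKdiag hKpm hx
  rw [hp, hq] at horth
  exact eq_zero_of_aeval_mulVec_dotProduct_eq_zero hB p q hpq horth
end

section
/- Let A be the adjacency matrix of an undirected bipartite circulant graph on N vertices (N even, every element of the generating set S odd) with degree d per node, let H_LP = ∏_{n=1}^T (1/2^k)(β_n I + A/d)^k and H_HP = ∏_{n=1}^T (1/2^k)(β_n I − A/d)^k be HGESWT filters with β_n = d̃_{α_n}/d, and let K be the alternating downsampling matrix (K_{ii} = +1 for even i, K_{ii} = −1 for odd i). Then K·H_LP = H_HP·K, and consequently the filterbank matrix W = (1/2)(I+K)H_LP + (1/2)(I−K)H_HP satisfies Wᵀ W = (1/2)(H_LP² + H_HP²). -/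
/-- The circulant adjacency matrix is symmetric. -/
lemma circAdj_transpose (N : ℕ) (S : Finset ℕ) (w : ℕ → ℝ) :
    (circAdj N S w).transpose = circAdj N S w := by
  have key : ∀ a b : ℤ, (-a) % (N : ℤ) = b % N ↔ a % (N : ℤ) = (-b) % N := fun a b => by
    change -a ≡ b [ZMOD N] ↔ a ≡ -b [ZMOD N]
    constructor <;> intro h <;> simpa using h.neg
  ext i j
  simp only [Matrix.transpose_apply, circAdj]
  refine Finset.sum_congr rfl fun s _ => ?_
  have h₁ := key ((i : ℤ) - j) s
  have h₂ := key ((i : ℤ) - j) (-s)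
  rw [neg_sub] at h₁ h₂
  rw [neg_neg] at h₂
  simp only [h₁, h₂, or_comm]

/-- In a bipartite circulant graph, the alternating signature anticommutes with the adjacency
matrix. -/
lemma semiconjBy_alternating_circAdj {N : ℕ} (hN : Even N) {S : Finset ℕ} (w : ℕ → ℝ)
    (hodd : ∀ s ∈ S, Odd s) :
    SemiconjBy (Matrix.diagonal fun i : Fin N => if Even (i : ℕ) then (1 : ℝ) else -1)
      (circAdj N S w) (-circAdj N S w) := by
  ext i j
  rw [Matrix.diagonal_mul, Matrix.mul_diagonal, Matrix.neg_apply]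
  simp only [circAdj, Finset.mul_sum, Finset.sum_mul, ← Finset.sum_neg_distrib]
  refine Finset.sum_congr rfl fun s hs => ?_
  split_ifs with hi hij hj hj hij hj <;> try simp
  all_goals
    exfalso
    obtain ⟨m, rfl⟩ := hN
    obtain ⟨t, rfl⟩ := hodd s hs
    have h : ((2 : ℤ)) ∣ ((m + m : ℕ) : ℤ) := ⟨m, by push_cast; ring⟩
    have h' := hij.imp (fun e => Int.ModEq.of_dvd h e) (fun e => Int.ModEq.of_dvd h e)
    simp only [Int.ModEq] at h'
    grind

/-- Elements of the algebra generated by a symmetric matrix are symmetric. -/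
lemma transpose_eq_of_mem_adjoin_singleton {n R : Type*} [Fintype n] [DecidableEq n]
    [CommRing R] {A : Matrix n n R} (hA : A.transpose = A) {B : Matrix n n R}
    (hB : B ∈ Algebra.adjoin R {A}) : B.transpose = B := by
  rw [Algebra.adjoin_singleton_eq_range_aeval] at hB
  obtain ⟨p, rfl⟩ := hB
  induction p using Polynomial.induction_on' with
  | add p q hp hq => simpa using congrArg₂ (· + ·) hp hq
  | monomial k a =>
    simp [Polynomial.aeval_monomial, ← Algebra.smul_def, Matrix.transpose_pow, hA]

/-- Semiconjugation passes to products of lists taken factor by factor. -/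
lemma SemiconjBy.list_prod_map {ι M : Type*} [Monoid M] {a : M} {f g : ι → M}
    (h : ∀ i, SemiconjBy a (f i) (g i)) (l : List ι) :
    SemiconjBy a (l.map f).prod (l.map g).prod := by
  induction l with
  | nil => simp
  | cons i l ih => simpa using (h i).mul_right ih

/-- If a symmetric involution `K` intertwines two commuting symmetric filters, the cross terms of
the critically sampled filterbank cancel. -/
lemma filterbank_transpose_mul_self {n : Type*} [Fintype n] [DecidableEq n]
    {K L H : Matrix n n ℝ} (hK : K.transpose = K) (hKK : K * K = 1)
    (hL : L.transpose = L) (hH : H.transpose = H) (hLH : Commute L H) (hKL : K * L = H * K) :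
    ((1 / 2 : ℝ) • ((1 + K) * L) + (1 / 2 : ℝ) • ((1 - K) * H)).transpose *
      ((1 / 2 : ℝ) • ((1 + K) * L) + (1 / 2 : ℝ) • ((1 - K) * H)) =
      (1 / 2 : ℝ) • (L * L + H * H) := by
  have hKH : K * H = L * K := by
    calc K * H = K * (H * K) * K := by simp only [mul_assoc, hKK, mul_one]
      _ = L * K := by rw [← hKL, ← mul_assoc, hKK, one_mul]
  have hW : (1 / 2 : ℝ) • ((1 + K) * L) + (1 / 2 : ℝ) • ((1 - K) * H) =
      (1 / 2 : ℝ) • ((L + H) + K * (L - H)) := by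
    rw [← smul_add]; congr 1; noncomm_ring
  have hsum : (L + H) * K = K * (L + H) := by rw [add_mul, mul_add, hKL, hKH, add_comm]
  have hdiff : (L - H) * K = -(K * (L - H)) := by rw [sub_mul, mul_sub, hKL, hKH, neg_sub]
  have hcomm : Commute (L + H) (L - H) :=
    ((Commute.refl L).add_left hLH.symm).sub_right (hLH.add_left (Commute.refl H))
  have hcross : (L + H) * (K * (L - H)) + (L - H) * K * (L + H) = 0 := by
    rw [← mul_assoc, hsum, hdiff, neg_mul, mul_assoc, mul_assoc,
      hcomm.eq, add_neg_cancel]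
  have hdiag : (L - H) * K * (K * (L - H)) = (L - H) * (L - H) := by
    rw [mul_assoc, ← mul_assoc K, hKK, one_mul]
  rw [hW, Matrix.transpose_smul, Matrix.transpose_add, Matrix.transpose_mul,
    Matrix.transpose_add, Matrix.transpose_sub, hK, hL, hH, smul_mul_smul_comm]
  have hexp : (L + H + (L - H) * K) * (L + H + K * (L - H)) = (2 : ℝ) • (L * L + H * H) := by
    calc _ = (L + H) * (L + H) + ((L + H) * (K * (L - H)) + (L - H) * K * (L + H)) +
          (L - H) * K * (K * (L - H)) := by simp only [add_mul _ ((L - H) * K), mul_add _ _ (K * (L - H))]; abel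
      _ = _ := by rw [hcross, hdiag, two_smul]; noncomm_ring
  rw [hexp, smul_smul]
  norm_num

/-- for a bipartite circulant graph with the alternating downsampling matrix
`K`, one has `K·H_LP = H_HP·K` and `Wᵀ W = (1/2)(H_LP² + H_HP²)`. -/
theorem hgeswt_bipartite_alternating_commutation
    (N : ℕ) (hNe : Even N) (S : Finset ℕ) (w : ℕ → ℝ)
    (hS : ∀ s ∈ S, 1 ≤ s ∧ 2 * s ≤ N - 1)
    (hw : ∀ s ∈ S, 0 < w s)
    (hodd : ∀ s ∈ S, Odd s)
    (T : ℕ) (α : Fin T → ℝ)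
    (β : Fin T → ℝ)
    (hβ : ∀ n : Fin T, β n =
      (∑ s ∈ S, 2 * w s * Real.cos (α n * s)) / (∑ s ∈ S, 2 * w s))
    (k : ℕ) (hk : 1 ≤ k)
    (A : Matrix (Fin N) (Fin N) ℝ) (hA : A = circAdj N S w)
    (HLP HHP : Matrix (Fin N) (Fin N) ℝ)
    (hHLP : HLP = ((List.finRange T).map (fun n =>
      (1 / 2 ^ k : ℝ) • (β n • (1 : Matrix (Fin N) (Fin N) ℝ)
        + (∑ s ∈ S, 2 * w s)⁻¹ • A) ^ k)).prod)
    (hHHP : HHP = ((List.finRange T).map (fun n =>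
      (1 / 2 ^ k : ℝ) • (β n • (1 : Matrix (Fin N) (Fin N) ℝ)
        - (∑ s ∈ S, 2 * w s)⁻¹ • A) ^ k)).prod)
    (K : Matrix (Fin N) (Fin N) ℝ)
    (hK : K = Matrix.diagonal (fun i : Fin N => if Even (i : ℕ) then (1 : ℝ) else -1))
    (W : Matrix (Fin N) (Fin N) ℝ)
    (hW : W = (1 / 2 : ℝ) • ((1 + K) * HLP) + (1 / 2 : ℝ) • ((1 - K) * HHP)) :
    K * HLP = HHP * K ∧
      W.transpose * W = (1 / 2 : ℝ) • (HLP * HLP + HHP * HHP) := by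
  subst hA hHLP hHHP hK hW
  have hanti := semiconjBy_alternating_circAdj hNe w hodd
  have hsymm := circAdj_transpose N S w
  generalize circAdj N S w = A at hanti hsymm ⊢
  generalize (∑ s ∈ S, 2 * w s)⁻¹ = c
  have hA : A ∈ Algebra.adjoin ℝ {A} := Algebra.self_mem_adjoin_singleton ℝ A
  have hL : ((List.finRange T).map fun n => (1 / 2 ^ k : ℝ) •
      (β n • (1 : Matrix (Fin N) (Fin N) ℝ) + c • A) ^ k).prod ∈ Algebra.adjoin ℝ {A} := by
    refine list_prod_mem fun x hx => ?_
    obtain ⟨n, -, rfl⟩ := List.mem_map.1 hx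
    exact Subalgebra.smul_mem _ (pow_mem (add_mem (Subalgebra.smul_mem _ (one_mem _) _)
      (Subalgebra.smul_mem _ hA _)) _) _
  have hH : ((List.finRange T).map fun n => (1 / 2 ^ k : ℝ) •
      (β n • (1 : Matrix (Fin N) (Fin N) ℝ) - c • A) ^ k).prod ∈ Algebra.adjoin ℝ {A} := by
    refine list_prod_mem fun x hx => ?_
    obtain ⟨n, -, rfl⟩ := List.mem_map.1 hx
    exact Subalgebra.smul_mem _ (pow_mem (sub_mem (Subalgebra.smul_mem _ (one_mem _) _)
      (Subalgebra.smul_mem _ hA _)) _) _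
  have hKL := SemiconjBy.list_prod_map (l := List.finRange T)
    (a := Matrix.diagonal fun i : Fin N => if Even (i : ℕ) then (1 : ℝ) else -1)
    (f := fun n => (1 / 2 ^ k : ℝ) • (β n • (1 : Matrix (Fin N) (Fin N) ℝ) + c • A) ^ k)
    (g := fun n => (1 / 2 ^ k : ℝ) • (β n • (1 : Matrix (Fin N) (Fin N) ℝ) - c • A) ^ k)
    fun n => by
      have h : SemiconjBy (Matrix.diagonal fun i : Fin N => if Even (i : ℕ) then (1 : ℝ) else -1)
          (β n • (1 : Matrix (Fin N) (Fin N) ℝ) + c • A) (β n • 1 - c • A) := by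
        have := hanti.eq
        simp only [SemiconjBy, mul_add, add_mul, mul_smul_comm, smul_mul_assoc, this, mul_one,
          one_mul, neg_mul, smul_neg, sub_eq_add_neg]
      have h' := (h.pow_right k).eq
      simp only [SemiconjBy, mul_smul_comm, smul_mul_assoc, h']
  refine ⟨hKL.eq, filterbank_transpose_mul_self (Matrix.diagonal_transpose _) ?_
    (transpose_eq_of_mem_adjoin_singleton hsymm hL)
    (transpose_eq_of_mem_adjoin_singleton hsymm hH) ?_ hKL.eq⟩
  · rw [Matrix.diagonal_mul_diagonal, ← Matrix.diagonal_one]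
    congr 1
    ext i
    split_ifs <;> simp
  · exact Algebra.commute_of_mem_adjoin_of_forall_mem_commute hH fun b hb => by
      obtain rfl := hb
      exact (Algebra.commute_of_mem_adjoin_self hL).symm
end

section
/- Let A be the adjacency matrix of an undirected circulant graph on N vertices with generating set S, positive weights (d_s)_{s∈S}, degree d per node and bandwidth B with 2B < N. Let the HGESWT parameters be of the form α_l = 2πl/N with β_l = d̃_{α_l}/d, and suppose there exist two parameter indices i, j among ᾱ (possibly equal) with d̃_{α_i} = −d̃_{α_j} (including the case d̃_{α_i} = 0). Then: (a) for the single-factor filters (k = 1, one parameter), H_{LP,α_i} = (1/2)(β_i I + A/d) equals −H_{HP,α_j} = −(1/2)(β_j I − A/d), so the low-pass branch annihilates and the high-pass branch reproduces the corresponding signals; and (b) for every diagonal downsampling matrix K with diagonal entries in {+1,−1}, the HGESWT filterbank matrix W = (1/2)(I+K)H_LP + (1/2)(I−K)H_HP built from a parameter list containing α_i and α_j is not invertible. -/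
open Matrix in
theorem Matrix.pow_mulVec_of_mulVec_eq_smul {n R : Type*} [Fintype n] [DecidableEq n] [CommRing R]
    {M : Matrix n n R} {v : n → R} {μ : R} (h : M *ᵥ v = μ • v) (k : ℕ) :
    (M ^ k) *ᵥ v = μ ^ k • v := by
  induction k with
  | zero => simp
  | succ k ih =>
    rw [pow_succ, ← mulVec_mulVec, h, mulVec_smul, ih, smul_smul, pow_succ, mul_comm]

open Matrix in
theorem Matrix.list_prod_mulVec_of_mulVec_eq_smul {ι n R : Type*} [Fintype n] [DecidableEq n]
    [CommRing R] {M : ι → Matrix n n R} {v : n → R} {μ : ι → R}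
    (h : ∀ x, M x *ᵥ v = μ x • v) (L : List ι) :
    (L.map M).prod *ᵥ v = (L.map μ).prod • v := by
  induction L with
  | nil => simp
  | cons x L ih =>
    rw [List.map_cons, List.prod_cons, ← mulVec_mulVec, ih, mulVec_smul, h, smul_smul,
      List.map_cons, List.prod_cons, mul_comm]

open Matrix in
/-- A product of powers of matrices sharing the eigenvector `v` annihilates `v` as soon as one of
the eigenvalues vanishes. -/
theorem Matrix.list_prod_smul_pow_mulVec_eq_zero {ι n R : Type*} [Fintype n] [DecidableEq n]
    [CommRing R] {M : ι → Matrix n n R} {v : n → R} {μ : ι → R}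
    (h : ∀ x, M x *ᵥ v = μ x • v) {L : List ι} {y : ι} (hy : y ∈ L) (hμ : μ y = 0)
    (c : R) {k : ℕ} (hk : k ≠ 0) :
    (L.map fun x => c • M x ^ k).prod *ᵥ v = 0 := by
  have hfactor : ∀ x, (c • M x ^ k) *ᵥ v = (c * μ x ^ k) • v := fun x => by
    rw [smul_mulVec, pow_mulVec_of_mulVec_eq_smul (h x), smul_smul]
  rw [list_prod_mulVec_of_mulVec_eq_smul hfactor, ← zero_smul R v]
  refine congrArg (· • v) ?_
  obtain ⟨L₁, L₂, rfl⟩ := List.append_of_mem hy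
  simp [hμ, hk]

theorem sum_fin_ite_sub_emod_eq {R : Type*} [AddCommMonoid R] {N : ℕ} (hN : 1 ≤ N) {f : ℤ → R}
    (hf : Function.Periodic f (N : ℤ)) (a t : ℤ) :
    (∑ m : Fin N, if (a - (m : ℤ)) % (N : ℤ) = t % (N : ℤ) then f m else 0) = f (a - t) := by
  have hN' : (0 : ℤ) < N := by exact_mod_cast hN
  have hnonneg := Int.emod_nonneg (a - t) hN'.ne'
  have hlt := Int.emod_lt_of_pos (a - t) hN'
  have hiff : ∀ m : Fin N,
      (a - (m : ℤ)) % (N : ℤ) = t % (N : ℤ) ↔ (m : ℤ) = (a - t) % (N : ℤ) := by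
    intro m
    have hm : ((m : ℤ)) % (N : ℤ) = m :=
      Int.emod_eq_of_lt (by positivity) (by exact_mod_cast m.2)
    rw [show (m : ℤ) = (a - t) % (N : ℤ) ↔ (m : ℤ) % N = (a - t) % (N : ℤ) by rw [hm]]
    change a - (m : ℤ) ≡ t [ZMOD N] ↔ (m : ℤ) ≡ a - t [ZMOD N]
    simp only [Int.modEq_iff_dvd]
    rw [← dvd_neg, show -(t - (a - (m : ℤ))) = a - t - m by ring]
  rw [Finset.sum_eq_single (⟨((a - t) % (N : ℤ)).toNat, by omega⟩ : Fin N)]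
  · have hval : (((a - t) % (N : ℤ)).toNat : ℤ) = (a - t) % (N : ℤ) := Int.toNat_of_nonneg hnonneg
    rw [if_pos ((hiff _).2 hval)]
    simp only [hval]
    have := hf.int_mul ((a - t) / N) ((a - t) % N)
    rw [← this]
    congr 1
    simp only [Int.cast_id]
    have := Int.emod_add_mul_ediv (a - t) N
    linarith
  · intro m _ hm
    refine if_neg fun h => hm (Fin.ext ?_)
    have := (hiff m).1 h
    simp only
    omega
  · simp

open Matrix in
theorem circAdj_mulVec_cos {N : ℕ} (hN : 1 ≤ N) {S : Finset ℕ} (w : ℕ → ℝ)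
    (hS : ∀ s ∈ S, 1 ≤ s ∧ 2 * s ≤ N - 1) (l : ℕ) {θ : ℝ} (hθ : θ = 2 * Real.pi * l / N) :
    circAdj N S w *ᵥ (fun m : Fin N => Real.cos (θ * (m : ℕ))) =
      (∑ s ∈ S, 2 * w s * Real.cos (θ * s)) • fun m : Fin N => Real.cos (θ * (m : ℕ)) := by
  have hN0 : (N : ℝ) ≠ 0 := by positivity
  have hper : Function.Periodic (fun m : ℤ => Real.cos (θ * m)) (N : ℤ) := by
    intro m
    have : θ * ((m + (N : ℤ) : ℤ) : ℝ) = θ * m + l * (2 * Real.pi) := by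
      push_cast
      rw [hθ]
      field_simp
    simp only [this, Real.cos_add_nat_mul_two_pi]
  ext a
  simp only [mulVec, dotProduct, circAdj, Pi.smul_apply, smul_eq_mul, Finset.sum_mul]
  rw [Finset.sum_comm]
  refine Finset.sum_congr rfl fun s hs => ?_
  obtain ⟨hs1, hs2⟩ := hS s hs
  have hne : (s : ℤ) % (N : ℤ) ≠ (-(s : ℤ)) % (N : ℤ) := by
    intro h
    have hdvd : (N : ℤ) ∣ s - -(s : ℤ) := Int.ModEq.dvd (Eq.symm h)
    have := Int.le_of_dvd (by omega) hdvd
    omega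
  have hsplit : ∀ m : Fin N,
      (if ((a : ℤ) - (m : ℤ)) % (N : ℤ) = (s : ℤ) % (N : ℤ) ∨
          ((a : ℤ) - (m : ℤ)) % (N : ℤ) = (-(s : ℤ)) % (N : ℤ)
        then w s else 0) * Real.cos (θ * (m : ℕ)) =
      w s * ((if ((a : ℤ) - (m : ℤ)) % (N : ℤ) = (s : ℤ) % (N : ℤ)
          then Real.cos (θ * ((m : ℤ) : ℝ)) else 0) +
        if ((a : ℤ) - (m : ℤ)) % (N : ℤ) = (-(s : ℤ)) % (N : ℤ)
          then Real.cos (θ * ((m : ℤ) : ℝ)) else 0) := by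
    intro m
    rw [Int.cast_natCast]
    split_ifs with h h₁ h₂ <;> first | (exfalso; tauto) | (exfalso; exact hne (by omega)) | simp
  rw [Finset.sum_congr rfl fun m _ => hsplit m, ← Finset.mul_sum, Finset.sum_add_distrib,
    sum_fin_ite_sub_emod_eq hN hper, sum_fin_ite_sub_emod_eq hN hper]
  push_cast
  rw [sub_neg_eq_add, mul_sub θ, mul_add θ, Real.cos_sub, Real.cos_add]
  ring

/-- if two HGESWT parameters (of the form `α_l = 2πl/N`) satisfy
`d̃_{α_i} = −d̃_{α_j}`, then (a) for single factors `H_{LP,α_i} = −H_{HP,α_j}` (low-pass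
annihilates, high-pass reproduces), and (b) the HGESWT filterbank built from a parameter
list containing `α_i` and `α_j` is not invertible for any downsampling pattern. -/
theorem hgeswt_opposing_parameters_not_invertible
    (N : ℕ) (hN : 1 ≤ N) (S : Finset ℕ) (w : ℕ → ℝ)
    (hS : ∀ s ∈ S, 1 ≤ s ∧ 2 * s ≤ N - 1)
    (hw : ∀ s ∈ S, 0 < w s) (hSne : S.Nonempty)
    (B : ℕ) (hBS : B ∈ S) (hBmax : ∀ s ∈ S, s ≤ B) (hB : 2 * B < N)
    (A : Matrix (Fin N) (Fin N) ℝ) (hA : A = circAdj N S w)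
    (T : ℕ) (α : Fin T → ℝ)
    (hform : ∀ n : Fin T, ∃ l : ℕ, α n = 2 * Real.pi * l / N)
    (β : Fin T → ℝ)
    (hβ : ∀ n : Fin T, β n =
      (∑ s ∈ S, 2 * w s * Real.cos (α n * s)) / (∑ s ∈ S, 2 * w s))
    (i j : Fin T)
    (hij : (∑ s ∈ S, 2 * w s * Real.cos (α i * s)) =
      -(∑ s ∈ S, 2 * w s * Real.cos (α j * s)))
    (k : ℕ) (hk : 1 ≤ k)
    (HLP HHP : Matrix (Fin N) (Fin N) ℝ)
    (hHLP : HLP = ((List.finRange T).map (fun n =>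
      (1 / 2 ^ k : ℝ) • (β n • (1 : Matrix (Fin N) (Fin N) ℝ)
        + (∑ s ∈ S, 2 * w s)⁻¹ • A) ^ k)).prod)
    (hHHP : HHP = ((List.finRange T).map (fun n =>
      (1 / 2 ^ k : ℝ) • (β n • (1 : Matrix (Fin N) (Fin N) ℝ)
        - (∑ s ∈ S, 2 * w s)⁻¹ • A) ^ k)).prod) :
    ((1 / 2 : ℝ) • (β i • (1 : Matrix (Fin N) (Fin N) ℝ) + (∑ s ∈ S, 2 * w s)⁻¹ • A) =
      -((1 / 2 : ℝ) • (β j • (1 : Matrix (Fin N) (Fin N) ℝ) - (∑ s ∈ S, 2 * w s)⁻¹ • A)))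
    ∧ ∀ K : Matrix (Fin N) (Fin N) ℝ,
        (∀ a b : Fin N, a ≠ b → K a b = 0) →
        (∀ a : Fin N, K a a = 1 ∨ K a a = -1) →
        ∀ W : Matrix (Fin N) (Fin N) ℝ,
          W = (1 / 2 : ℝ) • ((1 + K) * HLP) + (1 / 2 : ℝ) • ((1 - K) * HHP) →
          ¬ IsUnit W := by
  have hβij : β i = -β j := by rw [hβ, hβ, hij, neg_div]
  refine ⟨by rw [hβij]; module, ?_⟩
  rintro K - - W rfl hunit
  obtain ⟨l, hl⟩ := hform j
  set v : Fin N → ℝ := fun m => Real.cos (α j * (m : ℕ)) with hv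
  have hAv : ((∑ s ∈ S, 2 * w s)⁻¹ • A).mulVec v = β j • v := by
    rw [Matrix.smul_mulVec, hA, circAdj_mulVec_cos hN w hS l hl, smul_smul, hβ j, div_eq_inv_mul]
  have hLP : HLP.mulVec v = 0 := by
    rw [hHLP]
    refine Matrix.list_prod_smul_pow_mulVec_eq_zero (μ := fun n => β n + β j) (fun n => ?_)
      (List.mem_finRange i) (by simp [hβij]) _ (by omega)
    rw [Matrix.add_mulVec, hAv, Matrix.smul_mulVec, Matrix.one_mulVec, add_smul]
  have hHP : HHP.mulVec v = 0 := by
    rw [hHHP]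
    refine Matrix.list_prod_smul_pow_mulVec_eq_zero (μ := fun n => β n - β j) (fun n => ?_)
      (List.mem_finRange j) (by simp) _ (by omega)
    rw [Matrix.sub_mulVec, hAv, Matrix.smul_mulVec, Matrix.one_mulVec, sub_smul]
  have hv0 : v = 0 := by
    refine Matrix.mulVec_injective_of_isUnit hunit ?_
    simp [Matrix.add_mulVec, Matrix.smul_mulVec, ← Matrix.mulVec_mulVec, hLP, hHP]
  simpa [hv] using congrFun hv0 ⟨0, hN⟩
end

section
/- Let N be even and let A ∈ ℝ^{N×N} be the adjacency matrix of an undirected circulant graph with generating set S, positive weights (d_s)_{s∈S}, and bandwidth B satisfying 2B < N/2, with DFT-ordered eigenvalues λ_j = Σ_{s∈S} 2d_s cos(2πjs/N), j = 0,…,N−1. Let Ũ^H ∈ ℂ^{(N/2)×(N/2)} be the unnormalized DFT matrix of dimension N/2, (Ũ^H)_{j,m} = e^{−2πi·jm/(N/2)}, obtained by downsampling the first N/2 rows of the N-dimensional DFT at even columns, and let Λ̃ = diag(λ_0, λ_2, λ_4, …, λ_{N−2}) be the even-indexed eigenvalues. Then the matrix Ã = (2/N)·Ũ·Λ̃·Ũ^H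 ∈ ℝ^{(N/2)×(N/2)} is the symmetric circulant adjacency matrix of the circulant graph on N/2 vertices with the same generating set S and the same weights (d_s)_{s∈S}: Ã_{m,n} = d_s if m−n ≡ ±s (mod N/2) for some s ∈ S, and Ã_{m,n} = 0 otherwise. -/
open Complex in
/-- Orthogonality of the characters of `ℤ / M`, in exponential form. -/
theorem sum_exp_two_pi_mul_div (M : ℕ) (hM : M ≠ 0) (k : ℤ) :
    ∑ j : Fin M, exp ((j : ℕ) * (2 * Real.pi * I * k / M)) =
      if (M : ℤ) ∣ k then (M : ℂ) else 0 := by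
  have hroot := isPrimitiveRoot_exp M hM
  have hM' : (M : ℂ) ≠ 0 := Nat.cast_ne_zero.mpr hM
  have hpow : exp (2 * Real.pi * I * k / M) = exp (2 * Real.pi * I / M) ^ k := by
    rw [← exp_int_mul]
    ring_nf
  have hone : exp (2 * Real.pi * I * k / M) ^ M = 1 := by
    rw [← exp_nat_mul, exp_eq_one_iff]
    exact ⟨k, by field_simp⟩
  simp_rw [exp_nat_mul]
  rw [Fin.sum_univ_eq_sum_range (fun j => exp (2 * Real.pi * I * k / M) ^ j)]
  split_ifs with h
  · rw [hpow, (hroot.zpow_eq_one_iff_dvd k).mpr h]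
    simp
  · have hne : exp (2 * Real.pi * I * k / M) - 1 ≠ 0 := by
      rw [sub_ne_zero, hpow]
      exact fun h' => h ((hroot.zpow_eq_one_iff_dvd k).mp h')
    apply mul_left_cancel₀ hne
    rw [mul_geom_sum, hone]
    simp

/-- spectral downsampling of a circulant graph (keeping the first `N/2` DFT
rows sampled at even columns and the even-indexed eigenvalues) yields the circulant
adjacency matrix on `N/2` vertices with the same generating set and weights. -/
theorem circulant_spectral_coarsening
    (N : ℕ) (hNe : Even N) (hNpos : 0 < N) (S : Finset ℕ) (w : ℕ → ℝ)
    (hS : ∀ s ∈ S, 1 ≤ s ∧ 2 * s ≤ N - 1)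
    (hw : ∀ s ∈ S, 0 < w s)
    (B : ℕ) (hBS : B ∈ S) (hBmax : ∀ s ∈ S, s ≤ B) (hB : 2 * B < N / 2)
    (lam : ℕ → ℝ)
    (hlam : ∀ j : ℕ, lam j = ∑ s ∈ S, 2 * w s * Real.cos (2 * Real.pi * j * s / N))
    (UH : Matrix (Fin (N / 2)) (Fin (N / 2)) ℂ)
    (hUH : ∀ j m : Fin (N / 2), UH j m =
      Complex.exp (-2 * (Real.pi : ℂ) * Complex.I * ((j : ℕ) : ℂ) * ((m : ℕ) : ℂ) /
        ((N / 2 : ℕ) : ℂ)))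
    (Lam : Matrix (Fin (N / 2)) (Fin (N / 2)) ℂ)
    (hLam : Lam = Matrix.diagonal (fun j : Fin (N / 2) => ((lam (2 * (j : ℕ)) : ℝ) : ℂ)))
    (Atil : Matrix (Fin (N / 2)) (Fin (N / 2)) ℂ)
    (hAtil : Atil = ((2 : ℂ) / (N : ℂ)) • (UH.conjTranspose * Lam * UH)) :
    ∀ m n : Fin (N / 2), Atil m n =
      ∑ s ∈ S,
        if ((m : ℤ) - (n : ℤ)) % ((N / 2 : ℕ) : ℤ) = (s : ℤ) % ((N / 2 : ℕ) : ℤ) ∨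
           ((m : ℤ) - (n : ℤ)) % ((N / 2 : ℕ) : ℤ) = (-(s : ℤ)) % ((N / 2 : ℕ) : ℤ)
        then ((w s : ℝ) : ℂ) else 0 := by
  intro m n
  obtain ⟨M, rfl⟩ := hNe.two_dvd
  have hhalf : 2 * M / 2 = M := by lia
  have hM : 2 * M / 2 ≠ 0 := by lia
  have hcast : ((2 * M : ℕ) : ℂ) = 2 * ((2 * M / 2 : ℕ) : ℂ) := by
    rw [hhalf]
    push_cast
    ring
  have hcastR : ((2 * M : ℕ) : ℝ) = 2 * ((2 * M / 2 : ℕ) : ℝ) := by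
    rw [hhalf]
    push_cast
    ring
  simp only [hcastR] at hlam
  rw [hcast] at hAtil
  have hSpos : ∀ s ∈ S, 1 ≤ s := fun s hs => (hS s hs).1
  clear hcast hcastR hS hhalf
  generalize 2 * M / 2 = K at *
  have hK : (K : ℂ) ≠ 0 := Nat.cast_ne_zero.mpr hM
  have hterm : ∀ j : Fin K, star (UH j m) * (lam (2 * (j : ℕ)) : ℂ) * UH j n =
      ∑ s ∈ S, (w s : ℂ) *
        (Complex.exp ((j : ℕ) * (2 * Real.pi * Complex.I * ((m - n + s : ℤ) : ℂ) / K)) +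
          Complex.exp ((j : ℕ) * (2 * Real.pi * Complex.I * ((m - n - s : ℤ) : ℂ) / K))) := by
    intro j
    rw [hlam, hUH, hUH, Complex.star_def, ← Complex.exp_conj]
    push_cast
    rw [Finset.mul_sum, Finset.sum_mul]
    refine Finset.sum_congr rfl fun s _ => ?_
    have hcos : ∀ x : ℂ, 2 * (w s : ℂ) * Complex.cos x =
        w s * (Complex.exp (x * Complex.I) + Complex.exp (-x * Complex.I)) := fun x => by
      rw [← Complex.two_cos]
      ring
    have hfactor : ∀ a b c d : ℂ, a * (w s * (b + c)) * d =
        w s * (a * b * d + a * c * d) := fun a b c d => by ring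
    rw [hcos, hfactor]
    simp only [map_div₀, map_mul, map_neg, Complex.conj_ofReal, Complex.conj_I, map_natCast,
      map_ofNat, ← Complex.exp_add]
    congr 3 <;>
    · field_simp
      ring
  have hentry : Atil m n = (K : ℂ)⁻¹ *
      ∑ j : Fin K, star (UH j m) * (lam (2 * (j : ℕ)) : ℂ) * UH j n := by
    rw [hAtil, hLam, Matrix.smul_apply, Matrix.mul_apply, smul_eq_mul]
    simp only [Matrix.mul_diagonal, Matrix.conjTranspose_apply]
    congr 1
    field_simp
  rw [hentry, Finset.sum_congr rfl fun j _ => hterm j, Finset.sum_comm, Finset.mul_sum]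
  refine Finset.sum_congr rfl fun s hs => ?_
  have hspos : 1 ≤ s := hSpos s hs
  have hsB := hBmax s hs
  rw [← Finset.mul_sum, Finset.sum_add_distrib, sum_exp_two_pi_mul_div K hM,
    sum_exp_two_pi_mul_div K hM]
  have hneg : ((m : ℤ) - n) % (K : ℤ) = (-(s : ℤ)) % K ↔ (K : ℤ) ∣ m - n + s := by
    rw [Int.emod_eq_emod_iff_emod_sub_eq_zero, ← Int.dvd_iff_emod_eq_zero, sub_neg_eq_add]
  have hpos : ((m : ℤ) - n) % (K : ℤ) = (s : ℤ) % K ↔ (K : ℤ) ∣ m - n - s := by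
    rw [Int.emod_eq_emod_iff_emod_sub_eq_zero, ← Int.dvd_iff_emod_eq_zero]
  have hdisj : ¬ ((K : ℤ) ∣ m - n + s ∧ (K : ℤ) ∣ m - n - s) := by
    rintro ⟨h₁, h₂⟩
    have h := Int.le_of_dvd (by lia) (dvd_sub h₁ h₂)
    lia
  simp only [hneg, hpos]
  by_cases h₁ : (K : ℤ) ∣ m - n + s <;> by_cases h₂ : (K : ℤ) ∣ m - n - s
  · exact absurd ⟨h₁, h₂⟩ hdisj
  all_goals simp only [h₁, h₂, if_true, if_false, or_true, true_or, or_self, add_zero, zero_add,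
    mul_zero]
  all_goals field_simp
end

section
/- Let A be the adjacency matrix of an undirected bipartite circulant graph on N vertices (N even, every element of S odd) with degree d per node, and let γ_l = d̃_{2πl/N}/d denote the DFT-ordered eigenvalues of A/d. Fix M ≤ N/2 and k ≥ 1, set β_n = γ_n for n = 0,…,M−1, and let E = ∏_{n=0}^{M−1} (1/2^k)(β_n I_N + A/d)^k be the corresponding HGESWT low-pass filter. Let U_M^H ∈ ℂ^{M×N} be the first M rows of the unnormalized N-dimensional DFT matrix, Ũ_M^H ∈ ℂ^{M×(N/2)} the first M rows of the unnormalized DFT matrix of dimension N/2, and Ψ ∈ {0,1}^{(N/2)×N} the binary sampling matrix with Ψ_{j,l} = 1 iff l = 2j (retaining even-numbered nodes). If c_m := ∏_{n=0}^{M−1} ((β_n + γ_m)/2)^k ≠ 0 for all m = 0,…,M−1, then U_M^H = Ĉ·Ũ_M^H·Ψ·E, where Ĉ ∈ ℂ^{M×M} is the invertible diagonal matrix with diagonal entries Ĉ_{mm} = 2/c_m. -/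
open Matrix in
/-- Row eigenvectors of a matrix are row eigenvectors of its powers. -/
theorem Matrix.vecMul_pow_of_vecMul_eq_smul {n R : Type*} [Fintype n] [DecidableEq n] [CommRing R]
    {v : n → R} {B : Matrix n n R} {μ : R} (h : v ᵥ* B = μ • v) (k : ℕ) :
    v ᵥ* B ^ k = μ ^ k • v := by
  induction k with
  | zero => simp
  | succ k ih => rw [pow_succ, ← vecMul_vecMul, ih, smul_vecMul, h, smul_smul, pow_succ]

open Matrix in
/-- A common row eigenvector of a list of matrices is a row eigenvector of their product. -/
theorem Matrix.vecMul_list_prod_of_vecMul_eq_smul {ι n R : Type*} [Fintype n] [DecidableEq n]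
    [CommRing R] {v : n → R} {B : ι → Matrix n n R} {μ : ι → R}
    (h : ∀ i, v ᵥ* B i = μ i • v) (L : List ι) :
    v ᵥ* (L.map B).prod = (L.map μ).prod • v := by
  induction L with
  | nil => simp
  | cons a L ih =>
    rw [List.map_cons, List.prod_cons, ← vecMul_vecMul, h, smul_vecMul, ih, smul_smul,
      List.map_cons, List.prod_cons]

/-- The complex exponential `x ↦ exp (-2πi l x / N)` on the integers. -/
noncomputable def dftChar (N l : ℕ) (x : ℤ) : ℂ :=
  Complex.exp (-2 * (Real.pi : ℂ) * Complex.I * (l : ℂ) * (x : ℂ) / (N : ℂ))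

theorem dftChar_add (N l : ℕ) (x y : ℤ) :
    dftChar N l (x + y) = dftChar N l x * dftChar N l y := by
  unfold dftChar
  rw [← Complex.exp_add]
  push_cast
  ring_nf

theorem dftChar_mul_self {N : ℕ} (hN : 0 < N) (l : ℕ) (q : ℤ) :
    dftChar N l (N * q) = 1 := by
  have hN' : (N : ℂ) ≠ 0 := by exact_mod_cast hN.ne'
  unfold dftChar
  rw [Complex.exp_eq_one_iff]
  refine ⟨-(l * q), ?_⟩
  push_cast
  field_simp

theorem dftChar_emod {N : ℕ} (hN : 0 < N) (l : ℕ) (x : ℤ) :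
    dftChar N l (x % N) = dftChar N l x := by
  conv_rhs => rw [← Int.emod_add_mul_ediv x N]
  rw [dftChar_add, dftChar_mul_self hN, mul_one]

theorem dftChar_add_dftChar_neg (N l : ℕ) (x : ℤ) :
    dftChar N l x + dftChar N l (-x) =
      2 * ((Real.cos (2 * Real.pi * l * x / N) : ℝ) : ℂ) := by
  unfold dftChar
  push_cast
  rw [Complex.two_cos, add_comm]
  congr 2 <;> ring

/-- Shifting the frequency by half the period modulates by the alternating sign. -/
theorem dftChar_add_half {h : ℕ} (hh : 0 < h) (l n : ℕ) :
    dftChar (h + h) (l + h) n = (-1) ^ n * dftChar (h + h) l n := by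
  have hh' : (h : ℂ) ≠ 0 := by exact_mod_cast hh.ne'
  have key : Complex.exp (-(Real.pi * Complex.I)) = -1 := by
    rw [Complex.exp_neg, Complex.exp_pi_mul_I]
    norm_num
  unfold dftChar
  rw [← key, ← Complex.exp_nat_mul, ← Complex.exp_add]
  congr 1
  push_cast
  field_simp
  ring

/-- Summing a DFT vector against the indicator of a residue class evaluates the character. -/
theorem sum_dftChar_mul_ite {N : ℕ} (hN : 0 < N) (l : ℕ) (j t : ℤ) (a : ℂ) :
    ∑ i : Fin N, dftChar N l (i : ℕ) * (if ((i : ℕ) - j : ℤ) % N = t % N then a else 0) =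
      dftChar N l (j + t) * a := by
  have hN' : (0 : ℤ) < N := by exact_mod_cast hN
  have h0 := Int.emod_nonneg (j + t) hN'.ne'
  have h1 := Int.emod_lt_of_pos (j + t) hN'
  have hcast : (((j + t) % N).toNat : ℤ) = (j + t) % N := Int.toNat_of_nonneg h0
  have hiff (i : Fin N) : ((i : ℕ) - j : ℤ) % N = t % N ↔ i = ⟨((j + t) % N).toNat, by omega⟩ := by
    have hi : ((i : ℕ) : ℤ) % N = (i : ℕ) :=
      Int.emod_eq_of_lt (by omega) (by have := i.2; omega)
    rw [Fin.ext_iff, ← Int.natCast_inj (m := (i : ℕ)), hcast]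
    nth_rewrite 2 [← hi]
    change (i : ℤ) - j ≡ t [ZMOD N] ↔ (i : ℤ) ≡ j + t [ZMOD N]
    constructor
    · intro hmod
      simpa [add_comm] using hmod.add_right j
    · intro hmod
      simpa using hmod.sub_right j
  simp only [hiff, mul_ite, mul_zero, Finset.sum_ite_eq', Finset.mem_univ, if_true]
  rw [hcast, dftChar_emod hN]

open Matrix in
/-- DFT vectors are row eigenvectors of circulant adjacency matrices. -/
theorem dftChar_vecMul_circAdj {N : ℕ} (hN : 0 < N) {S : Finset ℕ} (w : ℕ → ℝ)
    (hS : ∀ s ∈ S, 1 ≤ s ∧ 2 * s ≤ N - 1) (l : ℕ) :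
    (fun i : Fin N => dftChar N l (i : ℕ)) ᵥ* (circAdj N S w).map Complex.ofReal =
      ((∑ s ∈ S, 2 * w s * Real.cos (2 * Real.pi * l * s / N) : ℝ) : ℂ) •
        fun i : Fin N => dftChar N l (i : ℕ) := by
  ext j
  simp only [vecMul, dotProduct, map_apply, circAdj, Complex.ofReal_sum, Finset.mul_sum,
    Pi.smul_apply, smul_eq_mul, Finset.sum_mul]
  rw [Finset.sum_comm]
  refine Finset.sum_congr rfl fun s hs => ?_
  obtain ⟨hs1, hs2⟩ := hS s hs
  have hne : (s : ℤ) % N ≠ (-(s : ℤ)) % N := by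
    intro h
    have hdvd := Int.ModEq.dvd h.symm
    have := Int.le_of_dvd (by omega) hdvd
    omega
  have hsplit (i : Fin N) :
      ((if ((i : ℕ) - (j : ℕ) : ℤ) % N = (s : ℤ) % N ∨
          ((i : ℕ) - (j : ℕ) : ℤ) % N = (-(s : ℤ)) % N then w s else 0 : ℝ) : ℂ) =
        (if ((i : ℕ) - (j : ℕ) : ℤ) % N = (s : ℤ) % N then (w s : ℂ) else 0) +
        (if ((i : ℕ) - (j : ℕ) : ℤ) % N = (-(s : ℤ)) % N then (w s : ℂ) else 0) := by
    by_cases h1 : ((i : ℕ) - (j : ℕ) : ℤ) % N = (s : ℤ) % N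
    · simp [h1, hne]
    · by_cases h2 : ((i : ℕ) - (j : ℕ) : ℤ) % N = (-(s : ℤ)) % N <;> simp [h1, h2, hne.symm]
  simp only [hsplit, mul_add, Finset.sum_add_distrib]
  rw [sum_dftChar_mul_ite hN, sum_dftChar_mul_ite hN, dftChar_add, dftChar_add]
  have hcos := dftChar_add_dftChar_neg N l s
  push_cast at hcos ⊢
  linear_combination (dftChar N l (j : ℕ) * (w s : ℂ)) * hcos

/-- Shifting the frequency by half the period flips the sign of the cosine at odd arguments. -/
theorem cos_add_half_of_odd {h : ℕ} (hh : 0 < h) (l : ℕ) {s : ℕ} (hs : Odd s) :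
    Real.cos (2 * Real.pi * (l + h : ℕ) * s / (h + h : ℕ)) =
      -Real.cos (2 * Real.pi * l * s / (h + h : ℕ)) := by
  have hh' : (h : ℝ) ≠ 0 := by exact_mod_cast hh.ne'
  have harg : 2 * Real.pi * (l + h : ℕ) * s / (h + h : ℕ) =
      2 * Real.pi * l * s / (h + h : ℕ) + s * Real.pi := by
    push_cast
    field_simp
    ring
  rw [harg, Real.cos_add_nat_mul_pi, hs.neg_one_pow, neg_one_mul]

open Matrix in
/-- Even-node sampling of a half-length DFT row averages two DFT vectors of full length. -/
theorem dft_mul_sampling_row {h M : ℕ} (hh : 0 < h) {U : Matrix (Fin M) (Fin h) ℂ}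
    (hU : ∀ (m : Fin M) (j : Fin h), U m j =
      Complex.exp (-2 * (Real.pi : ℂ) * Complex.I * ((m : ℕ) : ℂ) * ((j : ℕ) : ℂ) / (h : ℂ)))
    {P : Matrix (Fin h) (Fin (h + h)) ℂ}
    (hP : ∀ (j : Fin h) (l : Fin (h + h)), P j l = if (l : ℕ) = 2 * (j : ℕ) then 1 else 0)
    (m : Fin M) :
    (U * P) m = (1 / 2 : ℂ) • ((fun i : Fin (h + h) => dftChar (h + h) m (i : ℕ)) +
      fun i : Fin (h + h) => dftChar (h + h) (m + h) (i : ℕ)) := by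
  have hh' : (h : ℂ) ≠ 0 := by exact_mod_cast hh.ne'
  ext n
  simp only [Pi.smul_apply, Pi.add_apply, smul_eq_mul, mul_apply, hP, dftChar_add_half hh]
  rcases Nat.even_or_odd' (n : ℕ) with ⟨p, hp | hp⟩
  · have hpn : p < h := by have := n.2; omega
    have hiff (j : Fin h) : (n : ℕ) = 2 * (j : ℕ) ↔ j = ⟨p, hpn⟩ := by
      rw [Fin.ext_iff, hp]
      simp only
      omega
    simp only [hiff, mul_ite, mul_one, mul_zero, Finset.sum_ite_eq', Finset.mem_univ, if_true, hU]
    rw [hp, (even_two_mul p).neg_one_pow, one_mul, ← two_mul, ← mul_assoc, one_div,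
      inv_mul_cancel₀ two_ne_zero, one_mul, dftChar]
    congr 1
    push_cast
    field_simp
    ring
  · rw [hp, (odd_two_mul_add_one p).neg_one_pow, Finset.sum_eq_zero]
    · ring
    · intro j _
      rw [if_neg (by omega), mul_zero]

open Matrix in
/-- decomposition of the reduced GFT (DFT) basis of a bipartite circulant
graph as `U_M^H = Ĉ · Ũ_M^H · Ψ · E`, where `E` is a HGESWT low-pass (e-spline) filter,
`Ψ` samples the even-numbered nodes, `Ũ_M^H` is the reduced DFT of dimension `N/2`, and
`Ĉ` is an invertible diagonal matrix with entries `2/c_m`. -/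
theorem gft_espline_decomposition
    (N : ℕ) (hNe : Even N) (hNpos : 0 < N) (S : Finset ℕ) (w : ℕ → ℝ)
    (hS : ∀ s ∈ S, 1 ≤ s ∧ 2 * s ≤ N - 1)
    (hw : ∀ s ∈ S, 0 < w s) (hSne : S.Nonempty)
    (hodd : ∀ s ∈ S, Odd s)
    (A : Matrix (Fin N) (Fin N) ℝ) (hA : A = circAdj N S w)
    (γ : ℕ → ℝ)
    (hγ : ∀ l : ℕ, γ l =
      (∑ s ∈ S, 2 * w s * Real.cos (2 * Real.pi * l * s / N)) / (∑ s ∈ S, 2 * w s))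
    (M k : ℕ) (hk : 1 ≤ k) (hM : M ≤ N / 2)
    (E : Matrix (Fin N) (Fin N) ℂ)
    (hE : E = ((List.finRange M).map (fun n =>
      (1 / 2 ^ k : ℂ) • (((γ (n : ℕ) : ℝ) : ℂ) • (1 : Matrix (Fin N) (Fin N) ℂ)
        + (((∑ s ∈ S, 2 * w s : ℝ) : ℂ))⁻¹ • A.map Complex.ofReal) ^ k)).prod)
    (c : ℕ → ℂ)
    (hc : ∀ m : ℕ, c m = ∏ n ∈ Finset.range M, ((((γ n : ℝ) : ℂ) + ((γ m : ℝ) : ℂ)) / 2) ^ k)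
    (hcne : ∀ m : ℕ, m < M → c m ≠ 0)
    (Chat : Matrix (Fin M) (Fin M) ℂ)
    (hChat : Chat = Matrix.diagonal (fun m : Fin M => 2 / c (m : ℕ)))
    (UMH : Matrix (Fin M) (Fin N) ℂ)
    (hUMH : ∀ (m : Fin M) (n : Fin N), UMH m n =
      Complex.exp (-2 * (Real.pi : ℂ) * Complex.I * ((m : ℕ) : ℂ) * ((n : ℕ) : ℂ) / (N : ℂ)))
    (UtMH : Matrix (Fin M) (Fin (N / 2)) ℂ)
    (hUtMH : ∀ (m : Fin M) (j : Fin (N / 2)), UtMH m j =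
      Complex.exp (-2 * (Real.pi : ℂ) * Complex.I * ((m : ℕ) : ℂ) * ((j : ℕ) : ℂ) /
        ((N / 2 : ℕ) : ℂ)))
    (Psi : Matrix (Fin (N / 2)) (Fin N) ℂ)
    (hPsi : ∀ (j : Fin (N / 2)) (l : Fin N), Psi j l = if (l : ℕ) = 2 * (j : ℕ) then 1 else 0) :
    UMH = Chat * UtMH * Psi * E := by
  obtain ⟨h, rfl⟩ := hNe
  have hh : 0 < h := by omega
  have hhalf : (h + h) / 2 = h := by omega
  revert UtMH Psi
  rw [hhalf]
  intro UtMH hUtMH Psi hPsi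
  have hγhalf (l : ℕ) : γ (l + h) = -γ l := by
    rw [hγ, hγ, ← neg_div, ← Finset.sum_neg_distrib]
    congr 1
    refine Finset.sum_congr rfl fun s hs => ?_
    rw [cos_add_half_of_odd hh l (hodd s hs), mul_neg]
  have hEeig (l : ℕ) : (fun i : Fin (h + h) => dftChar (h + h) l (i : ℕ)) ᵥ* E =
      c l • fun i : Fin (h + h) => dftChar (h + h) l (i : ℕ) := by
    have hB (n : ℕ) := Matrix.vecMul_pow_of_vecMul_eq_smul
      (v := fun i : Fin (h + h) => dftChar (h + h) l (i : ℕ))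
      (B := ((γ n : ℝ) : ℂ) • 1 + ((∑ s ∈ S, 2 * w s : ℝ) : ℂ)⁻¹ • A.map Complex.ofReal)
      (μ := ((γ n : ℝ) : ℂ) + ((γ l : ℝ) : ℂ)) (by
        rw [vecMul_add, vecMul_smul, vecMul_smul, vecMul_one, hA,
          dftChar_vecMul_circAdj hNpos w hS, smul_smul, ← add_smul, hγ l, Complex.ofReal_div,
          div_eq_inv_mul]) k
    have hrange : (do let a ← List.finRange M; pure (a : ℕ)) = List.range M := by
      rw [← List.map_coe_finRange_eq_range, List.map_eq_flatMap]
      rfl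
    rw [hE, hrange, Matrix.vecMul_list_prod_of_vecMul_eq_smul
      (μ := fun n : ℕ => ((((γ n : ℝ) : ℂ) + ((γ l : ℝ) : ℂ)) / 2) ^ k)]
    · rw [hc, Finset.prod_range, ← List.prod_ofFn, List.ofFn_eq_map, ← List.map_coe_finRange_eq_range,
        List.map_map, Function.comp_def]
    · intro n
      rw [vecMul_smul, hB, smul_smul, div_pow, one_div_mul_eq_div]
  ext m n
  have hzero : c (m + h) = 0 := by
    rw [hc]
    refine Finset.prod_eq_zero (Finset.mem_range.2 m.2) ?_
    rw [hγhalf, Complex.ofReal_neg, add_neg_cancel, zero_div, zero_pow (by omega)]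
  have hrow : (UtMH * Psi * E) m =
      (c m / 2) • fun i : Fin (h + h) => dftChar (h + h) m (i : ℕ) := by
    rw [mul_apply_eq_vecMul, dft_mul_sampling_row hh hUtMH hPsi, smul_vecMul, add_vecMul,
      hEeig, hEeig, hzero, zero_smul, add_zero, smul_smul, one_div_mul_eq_div]
  have hcm := hcne m m.2
  rw [hUMH, hChat, Matrix.mul_assoc, Matrix.mul_assoc, diagonal_mul, ← Matrix.mul_assoc, hrow,
    Pi.smul_apply, smul_eq_mul, ← mul_assoc, div_mul_div_cancel₀ hcm, div_self two_ne_zero,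
    one_mul, dftChar]
  push_cast
  rfl
end

section
/- Let N ≥ 1 and let Q ∈ ℝ^{N×N} be the DCT-III matrix with entries Q_{m,n} = c(m)·√(2/N)·cos(πm(n+1/2)/N) for 0 ≤ m,n ≤ N−1, where c(0) = 1/√2 and c(m) = 1 for m ≥ 1 (Q is the graph Fourier transform basis of the unweighted path graph on N vertices). Let K, M be natural numbers with 4K ≤ M ≤ N. If x, x′ ∈ ℂ^N each have at most K nonzero entries and (Qx)_m = (Qx′)_m for every 0 ≤ m ≤ M−1, then x = x′; that is, a K-sparse graph signal on the path graph can be perfectly reconstructed from the first M ≥ 4K entries of its GFT (DCT) representation. -/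
open Polynomial in
/-- Vandermonde argument: if the first `M` power moments of weights `y` at distinct
nodes `c` vanish and at most `M` weights are nonzero, then all weights vanish. -/
theorem eq_zero_of_power_moments_eq_zero {ι F : Type*} [Fintype ι] [DecidableEq ι] [Field F]
    [DecidableEq F] {c y : ι → F} (hc : Function.Injective c) {M : ℕ}
    (hy : (Finset.univ.filter fun i => y i ≠ 0).card ≤ M)
    (hmom : ∀ k < M, ∑ i, c i ^ k * y i = 0) : y = 0 := by
  have hpoly : ∀ p : F[X], p.natDegree < M → ∑ i, p.eval (c i) * y i = 0 := by
    intro p hp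
    simp only [Polynomial.eval_eq_sum_range, Finset.sum_mul]
    rw [Finset.sum_comm]
    refine Finset.sum_eq_zero fun k hk => ?_
    have hk' : k < M := by
      have := Finset.mem_range.mp hk
      omega
    simp only [mul_assoc]
    rw [← Finset.mul_sum, hmom k hk', mul_zero]
  funext i
  by_contra hi
  set S := Finset.univ.filter fun i => y i ≠ 0 with hS
  have hiS : i ∈ S := by simpa [hS] using hi
  have hdeg : (∏ j ∈ S.erase i, (X - C (c j))).natDegree < M := by
    rw [natDegree_prod_of_monic _ _ fun j _ => monic_X_sub_C _]
    simp only [natDegree_X_sub_C, Finset.sum_const, smul_eq_mul, mul_one]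
    exact (Finset.card_erase_lt_of_mem hiS).trans_le hy
  have hsum := hpoly _ hdeg
  rw [Finset.sum_eq_single i] at hsum
  · refine mul_ne_zero ?_ hi hsum
    rw [eval_prod, Finset.prod_ne_zero_iff]
    intro j hj
    simpa [sub_eq_zero] using fun h => (Finset.ne_of_mem_erase hj) (hc h).symm
  · intro j _ hji
    by_cases hj : y j = 0
    · rw [hj, mul_zero]
    · rw [eval_prod, Finset.prod_eq_zero (i := j) (by simp [hS, hji, hj]) (by simp), zero_mul]
  · simp

/-- Vanishing of the cosine moments of order less than `M` implies vanishing of the mixed moments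
`cos θ ^ k * cos (m θ)` with `m + k < M`. -/
theorem sum_cos_pow_mul_cos_mul_eq_zero {ι : Type*} [Fintype ι] {θ : ι → ℂ} {y : ι → ℂ} {M : ℕ}
    (h : ∀ m : ℕ, m < M → ∑ i, Complex.cos (m * θ i) * y i = 0) (k : ℕ) :
    ∀ m : ℕ, m + k < M → ∑ i, Complex.cos (θ i) ^ k * Complex.cos (m * θ i) * y i = 0 := by
  induction k with
  | zero => simpa using h
  | succ k ih =>
    rintro (_ | m) hm
    · rw [← ih 1 (by omega)]
      refine Finset.sum_congr rfl fun i _ => ?_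
      simp [pow_succ]
    · have h₁ := ih (m + 2) (by omega)
      have h₀ := ih m (by omega)
      have hrec : ∀ t : ℂ, 2 * (Complex.cos t * Complex.cos ((m + 1 : ℕ) * t)) =
          Complex.cos ((m + 2 : ℕ) * t) + Complex.cos (m * t) := by
        intro t
        have e₁ : ((m + 2 : ℕ) : ℂ) * t = (m + 1 : ℕ) * t + t := by push_cast; ring
        have e₀ : (m : ℂ) * t = (m + 1 : ℕ) * t - t := by push_cast; ring
        rw [e₁, e₀, Complex.cos_add, Complex.cos_sub]
        ring
      have hsum := congrArg₂ (· + ·) h₁ h₀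
      simp only [← Finset.sum_add_distrib, add_zero] at hsum
      refine (mul_eq_zero.mp ?_).resolve_left (two_ne_zero (α := ℂ))
      rw [← hsum, Finset.mul_sum]
      refine Finset.sum_congr rfl fun i _ => ?_
      linear_combination Complex.cos (θ i) ^ k * y i * hrec (θ i)

/-- The Chebyshev nodes `cos (π (n + 1/2) / N)`, `0 ≤ n < N`, are distinct. -/
theorem injective_cos_chebyshev_node (N : ℕ) :
    Function.Injective fun n : Fin N => Real.cos (Real.pi * ((n : ℕ) + 1 / 2) / N) := by
  intro a b hab
  have hN : (0 : ℝ) < N := by exact_mod_cast a.pos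
  have hmem : ∀ n : Fin N, Real.pi * ((n : ℕ) + 1 / 2) / N ∈ Set.Icc 0 Real.pi := by
    intro n
    have hn : ((n : ℕ) : ℝ) + 1 ≤ N := by exact_mod_cast n.isLt
    refine ⟨by positivity, ?_⟩
    rw [div_le_iff₀ hN]
    exact mul_le_mul_of_nonneg_left (by linarith) Real.pi_pos.le
  have h := Real.injOn_cos (hmem a) (hmem b) hab
  rw [div_left_inj' hN.ne', mul_right_inj' Real.pi_ne_zero, add_left_inj] at h
  exact Fin.ext (by exact_mod_cast h)

/-- a K-sparse signal on the path graph is determined by the first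
`M ≥ 4K` entries of its GFT (DCT-III) representation. -/
theorem dct_sparse_recovery (N : ℕ) (hN : 1 ≤ N)
    (Q : Matrix (Fin N) (Fin N) ℝ)
    (hQ : ∀ m n : Fin N, Q m n =
      (if (m : ℕ) = 0 then 1 / Real.sqrt 2 else 1) * Real.sqrt (2 / N) *
        Real.cos (Real.pi * (m : ℕ) * ((n : ℕ) + 1 / 2) / N))
    (K M : ℕ) (hKM : 4 * K ≤ M) (hMN : M ≤ N)
    (x x' : Fin N → ℂ)
    (hx : (Finset.univ.filter fun i => x i ≠ 0).card ≤ K)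
    (hx' : (Finset.univ.filter fun i => x' i ≠ 0).card ≤ K)
    (hsamp : ∀ m : Fin N, (m : ℕ) < M →
      (Q.map Complex.ofReal).mulVec x m = (Q.map Complex.ofReal).mulVec x' m) :
    x = x' := by
  classical
  set θ : Fin N → ℝ := fun n => Real.pi * ((n : ℕ) + 1 / 2) / N with hθ
  have hcard : (Finset.univ.filter fun i => (x - x') i ≠ 0).card ≤ M := by
    refine (Finset.card_le_card (t := (Finset.univ.filter fun i => x i ≠ 0) ∪
      Finset.univ.filter fun i => x' i ≠ 0) ?_).trans
        ((Finset.card_union_le _ _).trans (by omega))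
    intro i
    simp only [Finset.mem_filter, Finset.mem_union, Finset.mem_univ, true_and, Pi.sub_apply]
    contrapose!
    rintro ⟨h, h'⟩
    rw [h, h', sub_zero]
  have hcos : ∀ m : ℕ, m < M → ∑ i, Complex.cos (m * (θ i : ℂ)) * (x - x') i = 0 := by
    intro m hm
    have hs := hsamp ⟨m, hm.trans_le hMN⟩ hm
    rw [← sub_eq_zero, ← Pi.sub_apply, ← Matrix.mulVec_sub] at hs
    set a : ℝ := (if m = 0 then 1 / Real.sqrt 2 else 1) * Real.sqrt (2 / N) with ha
    have ha0 : a ≠ 0 := by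
      have hN' : (0 : ℝ) < N := by exact_mod_cast hN
      have : 0 < a := by rw [ha]; split_ifs <;> positivity
      exact this.ne'
    refine (mul_eq_zero.mp ?_).resolve_left (Complex.ofReal_ne_zero.mpr ha0)
    rw [← hs, Finset.mul_sum, Matrix.mulVec, dotProduct]
    refine Finset.sum_congr rfl fun i _ => ?_
    have hentry : Q ⟨m, hm.trans_le hMN⟩ i = a * Real.cos (m * θ i) := by
      rw [hQ, ha, hθ]
      congr 2
      ring
    rw [Matrix.map_apply, hentry]
    push_cast
    ring
  have hinj : Function.Injective fun n => Complex.cos (θ n : ℂ) := by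
    intro i j hij
    simp only [← Complex.ofReal_cos, Complex.ofReal_inj] at hij
    exact injective_cos_chebyshev_node N hij
  refine sub_eq_zero.mp (eq_zero_of_power_moments_eq_zero hinj hcard fun k hk => ?_)
  simpa using sum_cos_pow_mul_cos_mul_eq_zero hcos k 0 (by simpa using hk)
end

section
/- Let N ≥ 2k+3 and let A ∈ ℝ^{N×N} be the adjacency matrix of the unweighted path graph on N vertices (A_{ij} = 1 iff |i−j| = 1), D its degree matrix, and A_n = D^{−1/2} A D^{−1/2} the normalized adjacency matrix. Let H_HP = (1/2^k)(I_N − A_n)^k. Then H_HP annihilates polynomial graph signals up to degree 2k−1 subject to a graph-border effect of T = 2(k+1) entries: for every polynomial p of degree at most 2k−1, the signal x with x_j = p(j) satisfies (H_HP x)_i = 0 for every index i with k+1 ≤ i ≤ N−2−k. -/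
/-- Away from the border, the normalized adjacency matrix of the path averages the two neighbours. -/
lemma path_normalizedAdj_mulVec_interior {N : ℕ} {A : Matrix (Fin N) (Fin N) ℝ}
    (hA : ∀ a b : Fin N, A a b = if (a : ℕ) + 1 = (b : ℕ) ∨ (b : ℕ) + 1 = (a : ℕ) then 1 else 0)
    {deg : Fin N → ℝ}
    (hdeg : ∀ a : Fin N, deg a = if (a : ℕ) = 0 ∨ (a : ℕ) = N - 1 then 1 else 2)
    (y : Fin N → ℝ) (j : ℕ) (hj : 1 ≤ j) (hjN : j + 3 < N) :
    ((Matrix.diagonal (fun a => (Real.sqrt (deg a))⁻¹) * A *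
      Matrix.diagonal (fun a => (Real.sqrt (deg a))⁻¹)).mulVec y) ⟨j + 1, by omega⟩ =
      (y ⟨j, by omega⟩ + y ⟨j + 2, by omega⟩) / 2 := by
  have hdeg_two : ∀ a : Fin N, 1 ≤ (a : ℕ) → (a : ℕ) + 1 < N → deg a = 2 := fun a h₁ h₂ => by
    rw [hdeg, if_neg (by omega)]
  have hsqrt : (Real.sqrt 2)⁻¹ * (Real.sqrt 2)⁻¹ = (1 / 2 : ℝ) := by
    rw [← mul_inv, Real.mul_self_sqrt zero_le_two, one_div]
  simp only [Matrix.mulVec, dotProduct, Matrix.mul_diagonal, Matrix.diagonal_mul]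
  rw [Finset.sum_eq_add (⟨j, by omega⟩ : Fin N) ⟨j + 2, by omega⟩]
  · rw [hA, hA, if_pos (by simp), if_pos (by simp), hdeg_two _ (by simp) (by simp; omega),
      hdeg_two _ hj (by simp; omega), hdeg_two _ (by simp) (by simp; omega), mul_one, hsqrt]
    ring
  · simp
  · intro c _ hc
    have h₁ : (c : ℕ) ≠ j := fun h => hc.1 (Fin.ext h)
    have h₂ : (c : ℕ) ≠ j + 2 := fun h => hc.2 (Fin.ext h)
    rw [hA, if_neg (by simp only; omega)]
    simp
  · simp
  · simp

/-- If `B` averages the two neighbours on rows `2, …, N - 3`, then `(1 - B) ^ m` acts on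
sampled functions as an iterated forward difference away from the border. -/
lemma one_sub_pow_mulVec_eq_fwdDiff {N : ℕ} {B : Matrix (Fin N) (Fin N) ℝ}
    (hB : ∀ (y : Fin N → ℝ) (j : ℕ) (_ : 1 ≤ j) (_ : j + 3 < N),
      B.mulVec y ⟨j + 1, by omega⟩ = (y ⟨j, by omega⟩ + y ⟨j + 2, by omega⟩) / 2)
    (f : ℝ → ℝ) (m j : ℕ) (hj : 1 ≤ j) (hjN : j + 2 * m + 1 < N) :
    ((1 - B) ^ m).mulVec (fun a : Fin N => f (a : ℕ)) ⟨j + m, by omega⟩ =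
      (-1 / 2) ^ m * ((fwdDiff 1)^[2 * m] f) j := by
  induction m generalizing j with
  | zero => simp
  | succ m ih =>
    have hB' := hB (((1 - B) ^ m).mulVec (fun a : Fin N => f (a : ℕ))) (j + m)
      (by omega) (by omega)
    have h₀ := ih j hj (by omega)
    have h₁ := ih (j + 1) (by omega) (by omega)
    have h₂ := ih (j + 2) (by omega) (by omega)
    simp only [show j + 1 + m = j + m + 1 by ring] at h₁
    simp only [show j + 2 + m = j + m + 2 by ring] at h₂
    rw [pow_succ', ← Matrix.mulVec_mulVec, Matrix.sub_mulVec, Matrix.one_mulVec, Pi.sub_apply]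
    simp only [← add_assoc]
    rw [hB', h₀, h₁, h₂, show 2 * (m + 1) = 2 * m + 1 + 1 by ring,
      Function.iterate_succ_apply', Function.iterate_succ_apply']
    simp only [fwdDiff]
    push_cast
    rw [show (j : ℝ) + 1 + 1 = j + 2 by ring]
    ring

/-- the path-graph HGSWT high-pass filter `(1/2^k)(I − A_n)^k` annihilates
polynomial graph signals of degree at most `2k−1`, subject to a graph-border effect of
`T = 2(k+1)` entries. -/
theorem path_hgswt_highpass_annihilation
    (N k : ℕ) (hk : 1 ≤ k) (hN : 2 * k + 3 ≤ N)
    (A : Matrix (Fin N) (Fin N) ℝ)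
    (hA : ∀ a b : Fin N, A a b = if (a : ℕ) + 1 = (b : ℕ) ∨ (b : ℕ) + 1 = (a : ℕ) then 1 else 0)
    (deg : Fin N → ℝ)
    (hdeg : ∀ a : Fin N, deg a = if (a : ℕ) = 0 ∨ (a : ℕ) = N - 1 then 1 else 2)
    (An : Matrix (Fin N) (Fin N) ℝ)
    (hAn : An = Matrix.diagonal (fun a => (Real.sqrt (deg a))⁻¹) * A *
      Matrix.diagonal (fun a => (Real.sqrt (deg a))⁻¹))
    (H : Matrix (Fin N) (Fin N) ℝ)
    (hH : H = (1 / 2 ^ k : ℝ) • ((1 : Matrix (Fin N) (Fin N) ℝ) - An) ^ k)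
    (p : Polynomial ℝ) (hp : p.natDegree ≤ 2 * k - 1)
    (x : Fin N → ℝ) (hx : ∀ j : Fin N, x j = p.eval ((j : ℕ) : ℝ))
    (i : Fin N) (hi1 : k + 1 ≤ (i : ℕ)) (hi2 : (i : ℕ) ≤ N - 2 - k) :
    H.mulVec x i = 0 := by
  obtain ⟨i, hiN⟩ := i
  obtain ⟨j, rfl⟩ : ∃ j, i = j + k := ⟨i - k, by simp only at hi1; omega⟩
  simp only at hi1 hi2
  obtain rfl : x = fun a : Fin N => p.eval ((a : ℕ) : ℝ) := funext hx
  have hB := path_normalizedAdj_mulVec_interior hA hdeg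
  rw [← hAn] at hB
  rw [hH, Matrix.smul_mulVec, Pi.smul_apply,
    one_sub_pow_mulVec_eq_fwdDiff hB p.eval k j (by omega) (by omega),
    Polynomial.fwdDiff_iter_eq_zero_of_degree_lt (by omega)]
  simp
end

section
/- Let A ∈ ℝ^{N×N} be the adjacency matrix of the unweighted path graph on N ≥ 2 vertices, D its degree matrix, A_n = D^{−1/2} A D^{−1/2} the normalized adjacency matrix, and for k ≥ 1 let H_LP = (1/2^k)(I + A_n)^k and H_HP = (1/2^k)(I − A_n)^k. Then for every diagonal downsampling matrix K with diagonal entries in {+1,−1} having at least one entry equal to +1 (a node retaining the low-pass component) and at least one entry equal to −1 (the complementary set of nodes retaining the high-pass components), the one-level filterbank matrix W = (1/2)(I_N + K)·H_LP + (1/2)(I_N − K)·H_HP is invertible. -/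
open Matrix

namespace Matrix

variable {V : Type*} [Fintype V] [DecidableEq V]

theorem IsHermitian.mulVec_eq_zero_of_pow_mulVec_eq_zero_s17 {M : Matrix V V ℝ} (hM : M.IsHermitian)
    {x : V → ℝ} {k : ℕ} (h : M ^ (k + 1) *ᵥ x = 0) : M *ᵥ x = 0 := by
  induction k with
  | zero => simpa using h
  | succ k ih =>
    apply ih
    have hT : (M ^ (k + 1))ᵀ = M ^ (k + 1) := by
      simpa using (hM.pow (k + 1)).eq
    rw [← dotProduct_self_eq_zero, dotProduct_mulVec, ← mulVec_transpose, hT, mulVec_mulVec,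
      show M ^ (k + 1) * M ^ (k + 1) = M ^ k * M ^ (k + 1 + 1) by simp only [← pow_add]; ring_nf,
      ← mulVec_mulVec, h, mulVec_zero, zero_dotProduct]

theorem PosSemidef.mulVec_eq_zero_of_dotProduct_pow_mulVec_eq_zero {M : Matrix V V ℝ}
    (hM : M.PosSemidef) {x : V → ℝ} {k : ℕ} (h : x ⬝ᵥ M ^ (k + 1) *ᵥ x = 0) : M *ᵥ x = 0 :=
  hM.isHermitian.mulVec_eq_zero_of_pow_mulVec_eq_zero_s17 <|
    ((hM.pow (k + 1)).dotProduct_mulVec_zero_iff x).1 (by simpa using h)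

theorem posSemidef_one_add_mul_one_sub {T : Matrix V V ℝ} (hadd : (1 + T).PosSemidef)
    (hsub : (1 - T).PosSemidef) : ((1 + T) * (1 - T)).PosSemidef := by
  have h₁ := hsub.mul_mul_conjTranspose_same (1 + T)
  have h₂ := hadd.mul_mul_conjTranspose_same (1 - T)
  rw [hadd.isHermitian.eq] at h₁
  rw [hsub.isHermitian.eq] at h₂
  convert (h₁.add h₂).smul (show (0 : ℝ) ≤ 1 / 2 by norm_num) using 1
  have : (1 + T) * (1 - T) * (1 + T) + (1 - T) * (1 + T) * (1 - T)
      = (2 : ℝ) • ((1 + T) * (1 - T)) := by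
    rw [two_smul]; noncomm_ring
  rw [this, smul_smul]
  norm_num

/-- On a fixed vector of `T`, the matrix `(1 + T) ^ k` acts as multiplication by `2 ^ k`. -/
theorem one_add_pow_mulVec_of_mulVec_eq {T : Matrix V V ℝ} {u : V → ℝ} (hu : T *ᵥ u = u) (k : ℕ) :
    (1 + T) ^ k *ᵥ u = (2 : ℝ) ^ k • u := by
  induction k with
  | zero => simp
  | succ k ih =>
    rw [pow_succ, ← mulVec_mulVec, add_mulVec, one_mulVec, hu, ← two_smul ℝ u, mulVec_smul, ih,
      smul_smul, pow_succ']

/-- A vector `x` with `(1 - T ^ 2) x = 0` for which `(1 + T) ^ (k + 1) x` vanishes somewhere is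
killed by `1 + T`, provided that nonzero fixed vectors of `T` vanish nowhere. -/
theorem one_add_mulVec_eq_zero {T : Matrix V V ℝ} {x : V → ℝ} {k : ℕ} {i : V}
    (hT : ∀ u : V → ℝ, T *ᵥ u = u → u i = 0 → u = 0)
    (hx : ((1 - T) * (1 + T)) *ᵥ x = 0) (hi : ((1 + T) ^ (k + 1) *ᵥ x) i = 0) :
    (1 + T) *ᵥ x = 0 := by
  have hu : T *ᵥ ((1 + T) *ᵥ x) = (1 + T) *ᵥ x := by
    rw [← mulVec_mulVec, sub_mulVec, one_mulVec, sub_eq_zero] at hx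
    exact hx.symm
  apply hT _ hu
  rw [pow_succ, ← mulVec_mulVec, one_add_pow_mulVec_of_mulVec_eq hu] at hi
  simpa using hi

/-- If every entry of `(1 + T) ^ (k + 1) x` or the matching one of `(1 - T) ^ (k + 1) x` vanishes, and
each case occurs, then `x = 0`. -/
theorem eq_zero_of_forall_one_add_pow_or_one_sub_pow {T : Matrix V V ℝ}
    (hadd : (1 + T).PosSemidef) (hsub : (1 - T).PosSemidef)
    (hpos : ∀ (u : V → ℝ) (i : V), T *ᵥ u = u → u i = 0 → u = 0)
    (hneg : ∀ (u : V → ℝ) (i : V), -T *ᵥ u = u → u i = 0 → u = 0)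
    {x : V → ℝ} {k : ℕ}
    (hx : ∀ i, ((1 + T) ^ (k + 1) *ᵥ x) i = 0 ∨ ((1 - T) ^ (k + 1) *ᵥ x) i = 0)
    (hlow : ∃ i, ((1 + T) ^ (k + 1) *ᵥ x) i = 0) (hhigh : ∃ i, ((1 - T) ^ (k + 1) *ᵥ x) i = 0) :
    x = 0 := by
  have hcomm : Commute (1 + T) (1 - T) := by
    show (1 + T) * (1 - T) = (1 - T) * (1 + T)
    noncomm_ring
  have horth : x ⬝ᵥ ((1 + T) * (1 - T)) ^ (k + 1) *ᵥ x = 0 := by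
    have hH : ((1 + T) ^ (k + 1))ᵀ = (1 + T) ^ (k + 1) := by
      simpa using (hadd.isHermitian.pow (k + 1)).eq
    rw [hcomm.mul_pow, ← mulVec_mulVec, dotProduct_mulVec, ← mulVec_transpose, hH]
    exact Finset.sum_eq_zero fun i _ => mul_eq_zero.2 (hx i)
  have hker := (posSemidef_one_add_mul_one_sub hadd hsub)
    |>.mulVec_eq_zero_of_dotProduct_pow_mulVec_eq_zero horth
  obtain ⟨i, hi⟩ := hlow
  obtain ⟨j, hj⟩ := hhigh
  have h₁ : (1 + T) *ᵥ x = 0 :=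
    one_add_mulVec_eq_zero (hpos · i) (hcomm.eq ▸ hker) hi
  have h₂ : (1 - T) *ᵥ x = 0 := by
    rw [sub_eq_add_neg] at hj ⊢
    refine one_add_mulVec_eq_zero (hneg · j) ?_ hj
    rwa [sub_neg_eq_add, ← sub_eq_add_neg]
  rw [add_mulVec, one_mulVec] at h₁
  rw [sub_mulVec, one_mulVec] at h₂
  funext a
  have e₁ := congrFun h₁ a
  have e₂ := congrFun h₂ a
  simp only [Pi.add_apply, Pi.sub_apply, Pi.zero_apply] at e₁ e₂ ⊢
  linarith

end Matrix

namespace SimpleGraph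

variable {V : Type*} [Fintype V] [DecidableEq V] (G : SimpleGraph V) [DecidableRel G.Adj]

/-- The normalized adjacency matrix `D^{-1/2} A D^{-1/2}` of a graph. -/
noncomputable def normAdjMatrix : Matrix V V ℝ :=
  diagonal (fun a => (√(G.degree a : ℝ))⁻¹) * G.adjMatrix ℝ *
    diagonal (fun a => (√(G.degree a : ℝ))⁻¹)

variable {G}

theorem one_sub_normAdjMatrix (hdeg : ∀ a, 0 < G.degree a) :
    1 - G.normAdjMatrix = diagonal (fun a => (√(G.degree a : ℝ))⁻¹) * G.lapMatrix ℝ *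
      diagonal (fun a => (√(G.degree a : ℝ))⁻¹) := by
  rw [normAdjMatrix, lapMatrix, mul_sub, sub_mul, degMatrix, diagonal_mul_diagonal,
    diagonal_mul_diagonal, ← diagonal_one]
  congr 2
  funext a
  have hpos : (0 : ℝ) < G.degree a := by exact_mod_cast hdeg a
  have hne := (Real.sqrt_pos.2 hpos).ne'
  field_simp
  exact Real.sq_sqrt hpos.le

theorem posSemidef_one_sub_normAdjMatrix (hdeg : ∀ a, 0 < G.degree a) :
    (1 - G.normAdjMatrix).PosSemidef := by
  rw [one_sub_normAdjMatrix hdeg]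
  simpa [diagonal_conjTranspose] using
    (posSemidef_lapMatrix ℝ G).mul_mul_conjTranspose_same
      (diagonal fun a => (√(G.degree a : ℝ))⁻¹)

theorem eq_zero_of_normAdjMatrix_mulVec_eq (hG : G.Preconnected) (hdeg : ∀ a, 0 < G.degree a)
    (u : V → ℝ) (i : V) (hu : G.normAdjMatrix *ᵥ u = u) (hi : u i = 0) : u = 0 := by
  have hne (a : V) : (√(G.degree a : ℝ))⁻¹ ≠ 0 :=
    inv_ne_zero (Real.sqrt_pos.2 (by exact_mod_cast hdeg a)).ne'
  have h : (1 - G.normAdjMatrix) *ᵥ u = 0 := by rw [sub_mulVec, one_mulVec, hu, sub_self]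
  rw [one_sub_normAdjMatrix hdeg, mul_assoc, ← mulVec_mulVec, ← mulVec_mulVec] at h
  have hL : G.lapMatrix ℝ *ᵥ (diagonal (fun a => (√(G.degree a : ℝ))⁻¹) *ᵥ u) = 0 := by
    funext a
    have := congrFun h a
    rw [mulVec_diagonal] at this
    exact (mul_eq_zero.1 this).resolve_left (hne a)
  rw [lapMatrix_mulVec_eq_zero_iff_forall_reachable] at hL
  funext a
  have := hL a i (hG a i)
  rw [mulVec_diagonal, mulVec_diagonal, hi, mul_zero] at this
  exact (mul_eq_zero.1 this).resolve_left (hne a)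

/-- Conjugation by the signs of a two-colouring negates the normalized adjacency matrix. -/
theorem diagonal_mul_normAdjMatrix_mul_diagonal {s : V → ℝ} (hs : ∀ a, s a * s a = 1)
    (hadj : ∀ a b, G.Adj a b → s b = -s a) :
    diagonal s * G.normAdjMatrix * diagonal s = -G.normAdjMatrix := by
  ext a b
  simp only [normAdjMatrix, mul_diagonal, diagonal_mul, Matrix.neg_apply, adjMatrix_apply]
  split_ifs with h
  · rw [hadj a b h]
    linear_combination (-(√(G.degree a : ℝ))⁻¹ * (√(G.degree b : ℝ))⁻¹) * hs a
  · simp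

theorem posSemidef_one_add_normAdjMatrix (hdeg : ∀ a, 0 < G.degree a) {s : V → ℝ}
    (hs : ∀ a, s a * s a = 1) (hadj : ∀ a b, G.Adj a b → s b = -s a) :
    (1 + G.normAdjMatrix).PosSemidef := by
  have h := (posSemidef_one_sub_normAdjMatrix hdeg).mul_mul_conjTranspose_same (diagonal s)
  rw [diagonal_conjTranspose, star_trivial, mul_sub, sub_mul,
    diagonal_mul_normAdjMatrix_mul_diagonal hs hadj, mul_one, diagonal_mul_diagonal] at h
  simpa [hs] using h

theorem eq_zero_of_neg_normAdjMatrix_mulVec_eq (hG : G.Preconnected)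
    (hdeg : ∀ a, 0 < G.degree a) {s : V → ℝ} (hs : ∀ a, s a * s a = 1)
    (hadj : ∀ a b, G.Adj a b → s b = -s a)
    (u : V → ℝ) (i : V) (hu : -G.normAdjMatrix *ᵥ u = u) (hi : u i = 0) : u = 0 := by
  have hS : diagonal s * diagonal s = 1 := by simp [diagonal_mul_diagonal, hs]
  have h : diagonal s *ᵥ u = 0 := by
    refine eq_zero_of_normAdjMatrix_mulVec_eq hG hdeg _ i ?_ (by simp [mulVec_diagonal, hi])
    conv_rhs => rw [← hu, ← diagonal_mul_normAdjMatrix_mul_diagonal hs hadj]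
    rw [mulVec_mulVec, mulVec_mulVec, ← mul_assoc, ← mul_assoc, hS, one_mul]
  rw [← one_mulVec u, ← hS, ← mulVec_mulVec, h, mulVec_zero]

theorem degree_pathGraph {n : ℕ} (hn : 2 ≤ n) [DecidableRel (pathGraph n).Adj] (a : Fin n) :
    (pathGraph n).degree a = if (a : ℕ) = 0 ∨ (a : ℕ) = n - 1 then 1 else 2 := by
  rw [← card_neighborFinset_eq_degree]
  split_ifs with h
  · rw [Finset.card_eq_one]
    refine ⟨if (a : ℕ) = 0 then ⟨1, by omega⟩ else ⟨n - 2, by omega⟩, ?_⟩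
    ext b
    rw [mem_neighborFinset, pathGraph_adj, Finset.mem_singleton]
    split_ifs <;> rw [Fin.ext_iff] <;> dsimp only <;> omega
  · rw [Finset.card_eq_two]
    refine ⟨⟨a - 1, by omega⟩, ⟨a + 1, by omega⟩, by simp only [ne_eq, Fin.mk.injEq]; omega, ?_⟩
    ext b
    rw [mem_neighborFinset, pathGraph_adj, Finset.mem_insert, Finset.mem_singleton, Fin.ext_iff,
      Fin.ext_iff]
    dsimp only
    omega

end SimpleGraph

/-- the one-level path-graph HGSWT filterbank (built from the normalized
adjacency matrix) is invertible for any downsampling pattern with at least one low-pass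
node and at least one high-pass node. -/
theorem path_hgswt_filterbank_invertible
    (N : ℕ) (hN : 2 ≤ N) (k : ℕ) (hk : 1 ≤ k)
    (A : Matrix (Fin N) (Fin N) ℝ)
    (hA : ∀ a b : Fin N, A a b = if (a : ℕ) + 1 = (b : ℕ) ∨ (b : ℕ) + 1 = (a : ℕ) then 1 else 0)
    (deg : Fin N → ℝ)
    (hdeg : ∀ a : Fin N, deg a = if (a : ℕ) = 0 ∨ (a : ℕ) = N - 1 then 1 else 2)
    (An : Matrix (Fin N) (Fin N) ℝ)
    (hAn : An = Matrix.diagonal (fun a => (Real.sqrt (deg a))⁻¹) * A *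
      Matrix.diagonal (fun a => (Real.sqrt (deg a))⁻¹))
    (HLP HHP : Matrix (Fin N) (Fin N) ℝ)
    (hHLP : HLP = (1 / 2 ^ k : ℝ) • ((1 : Matrix (Fin N) (Fin N) ℝ) + An) ^ k)
    (hHHP : HHP = (1 / 2 ^ k : ℝ) • ((1 : Matrix (Fin N) (Fin N) ℝ) - An) ^ k)
    (K : Matrix (Fin N) (Fin N) ℝ)
    (hKdiag : ∀ a b : Fin N, a ≠ b → K a b = 0)
    (hKpm : ∀ a : Fin N, K a a = 1 ∨ K a a = -1)
    (hKlp : ∃ a : Fin N, K a a = 1)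
    (hKhp : ∃ a : Fin N, K a a = -1)
    (W : Matrix (Fin N) (Fin N) ℝ)
    (hW : W = (1 / 2 : ℝ) • ((1 + K) * HLP) + (1 / 2 : ℝ) • ((1 - K) * HHP)) :
    IsUnit W := by
  classical
  have hAnG : An = (SimpleGraph.pathGraph N).normAdjMatrix := by
    rw [hAn, SimpleGraph.normAdjMatrix]
    have hd : deg = fun a => ((SimpleGraph.pathGraph N).degree a : ℝ) := by
      funext a
      rw [hdeg, SimpleGraph.degree_pathGraph hN]
      split_ifs <;> simp
    have hAG : A = (SimpleGraph.pathGraph N).adjMatrix ℝ := by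
      ext a b
      simp only [hA, SimpleGraph.adjMatrix_apply, SimpleGraph.pathGraph_adj]
    rw [hd, hAG]
  have hpc := SimpleGraph.pathGraph_preconnected N
  have hpos (a : Fin N) : 0 < (SimpleGraph.pathGraph N).degree a := by
    rw [SimpleGraph.degree_pathGraph hN]
    split_ifs <;> norm_num
  have hs (a : Fin N) : (-1 : ℝ) ^ (a : ℕ) * (-1) ^ (a : ℕ) = 1 := by
    rw [← mul_pow]; norm_num
  have hadj (a b : Fin N) (h : (SimpleGraph.pathGraph N).Adj a b) :
      (-1 : ℝ) ^ (b : ℕ) = -(-1) ^ (a : ℕ) := by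
    rcases SimpleGraph.pathGraph_adj.1 h with h | h <;> rw [← h, pow_succ] <;> ring
  obtain ⟨k, rfl⟩ : ∃ m, k = m + 1 := ⟨k - 1, by omega⟩
  have hKd : K = diagonal fun a => K a a := by
    ext a b
    by_cases hab : a = b
    · simp [hab]
    · rw [diagonal_apply_ne _ hab, hKdiag a b hab]
  have hrow (x : Fin N → ℝ) (a : Fin N) : (W *ᵥ x) a =
      (1 / 2 ^ (k + 1)) * ((1 + K a a) / 2 * ((1 + An) ^ (k + 1) *ᵥ x) a +
        (1 - K a a) / 2 * ((1 - An) ^ (k + 1) *ᵥ x) a) := by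
    rw [hW, hHLP, hHHP, add_mulVec, smul_mulVec, smul_mulVec, ← mulVec_mulVec, ← mulVec_mulVec,
      smul_mulVec, smul_mulVec, add_mulVec, sub_mulVec, one_mulVec, one_mulVec, hKd]
    simp only [Pi.add_apply, Pi.sub_apply, Pi.smul_apply, mulVec_diagonal, smul_eq_mul,
      diagonal_apply_eq]
    ring
  refine mulVec_injective_iff_isUnit.1 <| (injective_iff_map_eq_zero W.mulVecLin).2 fun x hx => ?_
  have hlow (a : Fin N) (ha : K a a = 1) : ((1 + An) ^ (k + 1) *ᵥ x) a = 0 := by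
    have := (hrow x a).symm.trans (congrFun hx a)
    simpa [ha] using this
  have hhigh (a : Fin N) (ha : K a a = -1) : ((1 - An) ^ (k + 1) *ᵥ x) a = 0 := by
    have := (hrow x a).symm.trans (congrFun hx a)
    norm_num [ha] at this
    exact this
  subst hAnG
  exact eq_zero_of_forall_one_add_pow_or_one_sub_pow
    (SimpleGraph.posSemidef_one_add_normAdjMatrix hpos hs hadj)
    (SimpleGraph.posSemidef_one_sub_normAdjMatrix hpos)
    (SimpleGraph.eq_zero_of_normAdjMatrix_mulVec_eq hpc hpos)
    (SimpleGraph.eq_zero_of_neg_normAdjMatrix_mulVec_eq hpc hpos hs hadj)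
    (fun a => (hKpm a).imp (hlow a) (hhigh a))
    (hKlp.imp hlow) (hKhp.imp hhigh)
end
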